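/- arXiv:2603.04344 — 2 statements merged into one kernel-verified Lean document; each statement's English description precedes it below -/
import Mathlib

section
/- For every integer d ≥ 2 there exists a D_0 such that for all D ≥ D_0, the Kautz digraph K(d,D) contains a directed edge e whose shortest-path congestion satisfies cong(e) > τ(d,D). -/
/-!
An extension of the edge-word `w = v₀ ⋯ v_D` of `e` by `t - 1` letters on the left and `k - t` on
the right is a walk of length `k` with `e` as its `t`-th edge, and there are `d ^ (k - 1)` of them.
If such a walk is not a geodesic, comparing it with a shorter walk between the same ends produces a
square whose second half starts at position `D` of the extended word (`window_dist`). If no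
extension had such a square, `cong e` would be the sum of `k * d ^ (k - 1)` over all `k`. The terms
`k = D` and `k = D - 1` of this sum already make up `τ`, and `k = D - 2` gives a surplus of
`(D - 2) * d ^ (D - 3)`.

Hence it suffices to find `w` for which the loss caused by squares is at most a small multiple of
`D * d ^ (D - 3)`. Let `w` be a prefix of a square-free ternary sequence, obtained from the
Thue–Morse sequence (`exists_sqFree`). A square of half-length `q` centred after the first `c`
letters of `w` cannot lie inside `w`. If it sticks out on the left, it prescribes `q - c` letters of
the extension, leaving at most `d ^ (k - 1 - (q - c))` extensions, and the prefix of `w` of length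
`c` recurs at position `q` (`card_left`; `card_right` is the mirror image). In a square-free word
the recurrences of the prefix of length `L` are more than `L` apart, so there are at most `D / L + 1`
of them. As the remaining sums are geometric, the loss for each `k` is at most
`2 * (D / L + 1 + 2 * L) * d ^ (k - 1)` (`sum_loss_le`, `mul_pow_le_U_add`), and the choice
`L = 12 * d ^ 2` is good enough for large `D`.
-/

open scoped BigOperators Classical

namespace Kautz

/-- A vertex of the Kautz digraph `K(d,D)`: a word of length `D` over the
alphabet `{0,1,…,d}` in which adjacent letters are distinct. -/
structure Vertex (d D : ℕ) where
  word : List (Fin (d+1))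
  length_eq : word.length = D
  chain : word.Chain' (· ≠ ·)

/-- Adjacency in `K(d,D)`: there is an edge `u → v` iff some word `w` of length
`D+1` with adjacent letters distinct has `u` as its prefix of length `D` and
`v` as its suffix of length `D`. -/
def Adj {d D : ℕ} (u v : Vertex d D) : Prop :=
  ∃ w : List (Fin (d+1)), w.length = D + 1 ∧ w.Chain' (· ≠ ·) ∧
    u.word = w.dropLast ∧ v.word = w.tail

/-- A directed edge of `K(d,D)`. -/
structure Edge (d D : ℕ) where
  src : Vertex d D
  tgt : Vertex d D
  adj : Adj src tgt

/-- The edge-word `w(e) = a₀a₁⋯a_D` of an edge `e : u → v`, namely `u`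
followed by the last letter of `v`. -/
def Edge.word {d D : ℕ} (e : Edge d D) : List (Fin (d+1)) :=
  e.src.word ++ e.tgt.word.drop (D - 1)

/-- `p` is a walk from `x` to `y`, recorded as the list of successive vertices. -/
def IsWalk {d D : ℕ} (p : List (Vertex d D)) (x y : Vertex d D) : Prop :=
  p.head? = some x ∧ p.getLast? = some y ∧ p.Chain' Adj

/-- Directed graph distance in `K(d,D)`. -/
noncomputable def dist {d D : ℕ} (x y : Vertex d D) : ℕ :=
  sInf {k | ∃ p : List (Vertex d D), IsWalk p x y ∧ p.length = k + 1}

/-- `N(e;k,t)`: the number of ordered pairs `(x,y)` with `dist x y = k` such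
that some geodesic (walk of length `k = dist x y`) from `x` to `y` uses `e` as
its `t`-th edge. -/
noncomputable def N {d D : ℕ} (e : Edge d D) (k t : ℕ) : ℕ :=
  Set.ncard {xy : Vertex d D × Vertex d D |
    dist xy.1 xy.2 = k ∧
    ∃ p : List (Vertex d D), IsWalk p xy.1 xy.2 ∧ p.length = k + 1 ∧
      p[t-1]? = some e.src ∧ p[t]? = some e.tgt}

/-- `U_k(e) = ∑_{t=1}^{k} N(e;k,t)`. -/
noncomputable def U {d D : ℕ} (e : Edge d D) (k : ℕ) : ℕ :=
  ∑ t ∈ Finset.Icc 1 k, N e k t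

/-- `cong(e) = ∑_{k=1}^{D} U_k(e)`. -/
noncomputable def cong {d D : ℕ} (e : Edge d D) : ℕ :=
  ∑ k ∈ Finset.Icc 1 D, U e k

/-- `τ(d,D) = (D−1)·d^{D−2} + D·d^{D−1}`. -/
def tau (d D : ℕ) : ℕ := (D - 1) * d ^ (D - 2) + D * d ^ (D - 1)

/-- A word has a border: some proper nonempty prefix equals the suffix of the
same length. -/
def HasBorder {α : Type*} (w : List α) : Prop :=
  ∃ ℓ, 1 ≤ ℓ ∧ ℓ ≤ w.length - 1 ∧ w.take ℓ = w.drop (w.length - ℓ)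

/-- An unbordered word. -/
def Unbordered {α : Type*} (w : List α) : Prop := ¬ HasBorder w

/-- A square-free word: no nonempty factor of the form `XX`. -/
def SquareFree {α : Type*} (w : List α) : Prop :=
  ¬ ∃ X : List α, X ≠ [] ∧ (X ++ X) <:+: w

/-- A `7/4⁺`-power-free word: no factor `x^k y` with `x` nonempty, `k ≥ 1`,
`y` a prefix of `x`, and `(k·|x| + |y|)/|x| > 7/4`. -/
def SevenFourthsPlusFree {α : Type*} (w : List α) : Prop :=
  ¬ ∃ (x y : List α) (k : ℕ), x ≠ [] ∧ 1 ≤ k ∧ y <+: x ∧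
    ((List.replicate k x).flatten ++ y) <:+: w ∧
    7 * x.length < 4 * (k * x.length + y.length)

/-- A word over `{0,1,…,d}` is ternary if it uses only the letters `{0,1,2}`. -/
def IsTernary {n : ℕ} (w : List (Fin n)) : Prop := ∀ a ∈ w, (a : ℕ) < 3

/-- The suffix of `w` of length `t`. -/
def suffixWord {α : Type*} (w : List α) (t : ℕ) : List α := w.drop (w.length - t)

/-- `R_t(w)`: the set of admissible overlap lengths `r` at position `t`, i.e.
those `r` with `t+1 ≤ r ≤ |w|−t−1` such that `w = A·B·V·B` where `B` is the
suffix of `w` of length `t`, `V` is nonempty, and `|B·V| = r`. -/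
noncomputable def Rt {α : Type*} (w : List α) (t : ℕ) : Finset ℕ :=
  (Finset.Icc (t + 1) (w.length - t - 1)).filter fun r =>
    ∃ A V : List α, V ≠ [] ∧
      w = A ++ suffixWord w t ++ V ++ suffixWord w t ∧ t + V.length = r

/-- The deficit `Δ_t(e) = d^{D−1} − N(e;D,t)`. -/
noncomputable def deficit {d D : ℕ} (e : Edge d D) (t : ℕ) : ℝ :=
  (d : ℝ) ^ (D - 1) - (N e D t : ℝ)

/-- The total deficit `Δ(e) = ∑_{t=1}^{D} Δ_t(e)`. -/
noncomputable def totalDeficit {d D : ℕ} (e : Edge d D) : ℝ :=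
  ∑ t ∈ Finset.Icc 1 D, deficit e t

/-- The weighted overlap count
`Ω_d(e) = ∑_{j=1}^{⌈(D+1)/2⌉} ∑_{r ∈ R_j(w(e))} d^{−(r−j)}`. -/
noncomputable def Omega {d D : ℕ} (e : Edge d D) : ℝ :=
  ∑ j ∈ Finset.Icc 1 ((D + 2) / 2), ∑ r ∈ Rt e.word j, (d : ℝ) ^ ((j : ℤ) - (r : ℤ))

/-- The overlap `ov(u,v)`: the largest `j ≤ D` such that the last `j` letters
of `u` equal the first `j` letters of `v`. -/
noncomputable def ov {d D : ℕ} (u v : Vertex d D) : ℕ :=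
  sSup {j | j ≤ D ∧ u.word.drop (D - j) = v.word.take j}

end Kautz

namespace Kautz

/-! ### A square-free ternary sequence -/

/-- The Thue–Morse sequence: the parity of the binary digit sum of `n`. -/
def tm : ℕ → ℕ
  | 0 => 0
  | n + 1 => ((n + 1) % 2 + tm ((n + 1) / 2)) % 2

theorem tm_le (n : ℕ) : tm n ≤ 1 := by
  cases n with
  | zero => simp [tm]
  | succ n => rw [tm]; omega

theorem tm_even (n : ℕ) : tm (2 * n) = tm n := by
  cases n with
  | zero => rfl
  | succ n =>
    have h := tm_le (n + 1)
    rw [show 2 * (n + 1) = (2 * n + 1) + 1 by ring, tm,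
      show (2 * n + 1 + 1) / 2 = n + 1 by omega]
    omega

theorem tm_odd (n : ℕ) : tm (2 * n + 1) = 1 - tm n := by
  have h := tm_le n
  rw [tm, show (2 * n + 1) / 2 = n by omega]
  omega

/-- The Thue–Morse sequence is overlap-free. An overlap of even period `2q` restricts to one of
period `q` along the indices of one parity. An overlap of odd period `p` would make its
last `p + 1` letters alternate, contradicting that the first and last of these agree. -/
theorem tm_overlapFree (p : ℕ) : 1 ≤ p → ∀ n, ¬ ∀ i ≤ p, tm (n + i) = tm (n + p + i) := by
  induction p using Nat.strong_induction_on with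
  | _ p ih =>
    intro hp n h
    rcases Nat.even_or_odd' p with ⟨q, rfl | rfl⟩
    · refine ih q (by omega) (by omega) (n / 2) fun i hi => ?_
      have h1 := h (2 * i) (by omega)
      rcases Nat.even_or_odd' n with ⟨m, rfl | rfl⟩
      · rw [show 2 * m + 2 * i = 2 * (m + i) by ring,
          show 2 * m + 2 * q + 2 * i = 2 * (m + q + i) by ring, tm_even, tm_even] at h1
        rwa [show 2 * m / 2 = m by omega]
      · rw [show 2 * m + 1 + 2 * i = 2 * (m + i) + 1 by ring,
          show 2 * m + 1 + 2 * q + 2 * i = 2 * (m + q + i) + 1 by ring, tm_odd, tm_odd] at h1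
        rw [show (2 * m + 1) / 2 = m by omega]
        have := tm_le (m + i)
        have := tm_le (m + q + i)
        omega
    · have step : ∀ m, m % 2 = 0 → tm (m + 1) = 1 - tm m := fun m hm => by
        obtain ⟨k, rfl⟩ : ∃ k, m = 2 * k := ⟨m / 2, by omega⟩
        rw [tm_odd, tm_even]
      set p := 2 * q + 1 with hpdef
      have alt : ∀ i < p, tm (n + p + i + 1) = 1 - tm (n + p + i) := fun i hi => by
        rcases Nat.mod_two_eq_zero_or_one (n + p + i) with h0 | h0
        · exact step _ h0
        · have h1 := step (n + i) (by omega)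
          have h2 := h i (by omega)
          have h3 := h (i + 1) (by omega)
          rw [← add_assoc, ← add_assoc] at h3
          omega
      have alt2 : ∀ j ≤ q, tm (n + p + 2 * j) = tm (n + p) := by
        intro j
        induction j with
        | zero => simp
        | succ j ihj =>
          intro hj
          have h1 := alt (2 * j) (by omega)
          have h2 := alt (2 * j + 1) (by omega)
          have h3 := ihj (by omega)
          have := tm_le (n + p)
          rw [show n + p + (2 * j + 1) + 1 = n + p + 2 * (j + 1) by ring,
            show n + p + (2 * j + 1) = n + p + 2 * j + 1 by ring] at h2
          omega
      have h1 := alt2 q le_rfl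
      have h2 := alt (2 * q) (by omega)
      have h3 := h p le_rfl
      rw [show n + p + 2 * q + 1 = n + p + p by omega] at h2
      have := tm_le (n + p)
      omega

/-- `v₀ ⋯ v_D` contains no square. -/
def SqFreeOn {α : Type*} (v : ℕ → α) (D : ℕ) : Prop :=
  ∀ a q, 1 ≤ q → a + 2 * q ≤ D + 1 → ∃ i < q, v (a + i) ≠ v (a + q + i)

theorem SqFreeOn.ne {α : Type*} {v : ℕ → α} {D : ℕ} (h : SqFreeOn v D) {i : ℕ} (hi : i + 1 ≤ D) :
    v i ≠ v (i + 1) := by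
  obtain ⟨j, hj, h⟩ := h i 1 le_rfl (by omega)
  obtain rfl : j = 0 := by omega
  simpa using h

theorem SqFreeOn.reverse {α : Type*} {v : ℕ → α} {D : ℕ} (h : SqFreeOn v D) :
    SqFreeOn (fun j => v (D - j)) D := by
  intro a q hq haq
  obtain ⟨i, hi, hne⟩ := h (D + 1 - (a + 2 * q)) q hq (by omega)
  refine ⟨q - 1 - i, by omega, ?_⟩
  beta_reduce
  rw [show D - (a + (q - 1 - i)) = D + 1 - (a + 2 * q) + q + i by omega,
    show D - (a + q + (q - 1 - i)) = D + 1 - (a + 2 * q) + i by omega]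
  exact hne.symm

/-- The successive differences of the Thue–Morse sequence are square-free: over a square of
period `p` in the differences, the values at `n, n + p, n + 2p` form an arithmetic progression
in `{0, 1}`, hence are equal, so the square comes from an overlap. -/
theorem exists_sqFree (d : ℕ) (hd : 2 ≤ d) : ∃ v : ℕ → Fin (d + 1), ∀ D, SqFreeOn v D := by
  have hlt : ∀ n, tm (n + 1) + 1 - tm n < d + 1 := fun n => by
    have := tm_le (n + 1)
    omega
  refine ⟨fun n => ⟨tm (n + 1) + 1 - tm n, hlt n⟩, fun D a q hq _ => ?_⟩
  by_contra! hcon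
  have hs : ∀ i ≤ q, (tm (a + i) : ℤ) - tm a = tm (a + q + i) - tm (a + q) := by
    intro i
    induction i with
    | zero => simp
    | succ i ih =>
      intro hi
      have h1 := congrArg Fin.val (hcon i (by omega))
      have h2 := ih (by omega)
      simp only at h1
      have := tm_le (a + i)
      have := tm_le (a + q + i)
      rw [← add_assoc, ← add_assoc]
      omega
  refine tm_overlapFree q hq a fun i hi => ?_
  have h1 := hs q le_rfl
  have h2 := hs i hi
  have := tm_le a
  have := tm_le (a + q)
  have := tm_le (a + q + q)
  omega

/-! ### Summing the losses caused by recurring prefixes -/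

/-- The prefix of `v₀ ⋯ v_D` of length `c`, truncated so that its translate by `q` stays inside
the word, recurs at position `q`. -/
def Match {α : Type*} (v : ℕ → α) (D c q : ℕ) : Prop :=
  ∀ j < c, j + q ≤ D → v j = v (j + q)

/-- Bound for the number of extensions of `v₀ ⋯ v_D`, out of `d ^ (k - 1)`, having a square of
some half-length `q` that sticks out of the word by `q - c` letters on the left, where `c` letters
of its left half lie in the word. -/
noncomputable def loss {α : Type*} (d D k : ℕ) (v : ℕ → α) (c : ℕ) : ℕ :=
  ∑ q ∈ Finset.Icc 1 k, if c < q ∧ Match v D c q then d ^ (k - 1 - (q - c)) else 0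

theorem sum_pow_le {d : ℕ} (hd : 2 ≤ d) (k : ℕ) (s : Finset ℕ) (e : ℕ → ℕ)
    (he : Set.InjOn e s) (h1 : ∀ q ∈ s, e q < k) : ∑ q ∈ s, d ^ e q ≤ d ^ k := by
  rw [← Finset.sum_image (f := fun i => d ^ i) (g := e) he]
  refine (Nat.geomSum_lt hd fun i hi => ?_).le
  obtain ⟨q, hq, rfl⟩ := Finset.mem_image.1 hi
  exact h1 q hq

/-- In a square-free word the prefix of length `L` cannot recur at two positions at distance
at most `L`, so it recurs at most `D / L + 1` times. -/
theorem card_recur_le {α : Type*} {v : ℕ → α} {D : ℕ} (hv : SqFreeOn v D) (L : ℕ) (hL : 1 ≤ L) :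
    ((Finset.Icc 1 D).filter fun q => q + L ≤ D + 1 ∧ ∀ j < L, v j = v (j + q)).card
      ≤ D / L + 1 := by
  rw [← Finset.card_range (D / L + 1)]
  refine Finset.card_le_card_of_injOn (fun q => q / L) (fun q hq => ?_) ?_
  · simp only [Finset.coe_filter, Finset.mem_Icc, Set.mem_ofPred_eq] at hq
    simp only [Finset.coe_range, Set.mem_Iio]
    exact Nat.lt_succ_of_le (Nat.div_le_div_right hq.1.2)
  · have key : ∀ q q', q < q' → q + L ≤ D + 1 → q' + L ≤ D + 1 → q / L = q' / L →
        (∀ j < L, v j = v (j + q)) → (∀ j < L, v j = v (j + q')) → False := by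
      intro q q' hlt h1 h2 hdiv m m'
      have hg : q' - q < L := by
        have e1 := Nat.div_add_mod q L
        have e2 := Nat.div_add_mod q' L
        have l2 := Nat.mod_lt q' hL
        rw [hdiv] at e1
        omega
      obtain ⟨i, hi, hne⟩ := hv q (q' - q) (by omega) (by omega)
      apply hne
      rw [show q + i = i + q by ring, show q + (q' - q) + i = i + q' by omega,
        ← m i (by omega), ← m' i (by omega)]
    intro q hq q' hq' hdiv
    simp only [Finset.coe_filter, Finset.mem_Icc, Set.mem_ofPred_eq] at hq hq'
    rcases lt_trichotomy q q' with h | h | h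
    · exact (key q q' h hq.2.1 hq'.2.1 hdiv hq.2.2 hq'.2.2).elim
    · exact h
    · exact (key q' q h hq'.2.1 hq.2.1 hdiv.symm hq'.2.2 hq.2.2).elim

/-- Each `c < L` and each shift `q` contributes at most `d ^ (k - 1)`, by a geometric sum. For
`c ≥ L` only shifts `q` at which the prefix of length `L` recurs, or which are within `L` of the
end of the word, contribute. -/
theorem sum_loss_le {α : Type*} {v : ℕ → α} {d D k : ℕ} (hd : 2 ≤ d) (hk : k ≤ D)
    (hv : SqFreeOn v D) (L : ℕ) (hL : 1 ≤ L) :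
    ∑ c ∈ Finset.Icc 1 D, loss d D k v c ≤ (D / L + 1 + 2 * L) * d ^ (k - 1) := by
  set Q := ((Finset.Icc 1 D).filter fun q => q + L ≤ D + 1 ∧ ∀ j < L, v j = v (j + q)) ∪
    Finset.Ico (D + 1 - L) (D + 1) with hQ
  have hQc : Q.card ≤ D / L + 1 + L := by
    refine (Finset.card_union_le _ _).trans (Nat.add_le_add (card_recur_le hv L hL) ?_)
    rw [Nat.card_Ico]; omega
  let g : ℕ → ℕ → ℕ := fun c q => if c < q then d ^ (k - 1 - (q - c)) else 0
  have hpt : ∀ c ∈ Finset.Icc 1 D, ∀ q ∈ Finset.Icc 1 k,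
      (if c < q ∧ Match v D c q then d ^ (k - 1 - (q - c)) else 0)
        ≤ (if c < L then g c q else 0) + (if q ∈ Q then g c q else 0) := by
    intro c hc q hq
    rw [Finset.mem_Icc] at hc hq
    by_cases h : c < q ∧ Match v D c q
    · rw [if_pos h]
      have hg : g c q = d ^ (k - 1 - (q - c)) := if_pos h.1
      by_cases hcL : c < L
      · rw [if_pos hcL, hg]; omega
      · have : q ∈ Q := by
          rw [hQ, Finset.mem_union, Finset.mem_filter, Finset.mem_Ico, Finset.mem_Icc]
          by_cases hqL : q + L ≤ D + 1
          · exact Or.inl ⟨by omega, hqL, fun j hj => h.2 j (by omega) (by omega)⟩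
          · right; omega
        rw [if_pos this, hg]; omega
    · rw [if_neg h]; omega
  have hg1 : ∀ c, 1 ≤ c → ∑ q ∈ Finset.Icc 1 k, g c q ≤ d ^ (k - 1) := by
    intro c hc
    rw [← Finset.sum_filter]
    refine sum_pow_le hd _ _ _ ?_ ?_
    · intro a ha b hb hab
      simp only [Finset.coe_filter, Finset.mem_Icc, Set.mem_ofPred_eq] at ha hb
      simp only at hab
      omega
    · intro q hq
      simp only [Finset.mem_filter, Finset.mem_Icc] at hq
      omega
  have hg2 : ∀ q ≤ k, ∑ c ∈ Finset.Icc 1 D, g c q ≤ d ^ (k - 1) := by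
    intro q hqk
    rw [← Finset.sum_filter]
    refine sum_pow_le hd _ _ _ ?_ ?_
    · intro a ha b hb hab
      simp only [Finset.coe_filter, Finset.mem_Icc, Set.mem_ofPred_eq] at ha hb
      simp only at hab
      omega
    · intro c hc
      simp only [Finset.mem_filter, Finset.mem_Icc] at hc
      omega
  calc ∑ c ∈ Finset.Icc 1 D, loss d D k v c
      ≤ ∑ c ∈ Finset.Icc 1 D, ∑ q ∈ Finset.Icc 1 k,
          ((if c < L then g c q else 0) + (if q ∈ Q then g c q else 0)) :=
        Finset.sum_le_sum fun c hc => Finset.sum_le_sum fun q hq => hpt c hc q hq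
    _ = (∑ c ∈ Finset.Icc 1 D, ∑ q ∈ Finset.Icc 1 k, if c < L then g c q else 0) +
        ∑ q ∈ Finset.Icc 1 k, ∑ c ∈ Finset.Icc 1 D, if q ∈ Q then g c q else 0 := by
        simp only [Finset.sum_add_distrib]
        rw [Finset.sum_comm (s := Finset.Icc 1 k)]
    _ ≤ L * d ^ (k - 1) + (D / L + 1 + L) * d ^ (k - 1) := by
        refine Nat.add_le_add ?_ ?_
        · calc _ ≤ ∑ c ∈ Finset.Icc 1 D, if c < L then d ^ (k - 1) else 0 := by
                refine Finset.sum_le_sum fun c hc => ?_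
                split_ifs
                · exact hg1 c (Finset.mem_Icc.1 hc).1
                · simp
            _ ≤ _ := by
                rw [← Finset.sum_filter, Finset.sum_const, smul_eq_mul]
                refine Nat.mul_le_mul_right _ ?_
                calc _ ≤ (Finset.range L).card := Finset.card_le_card fun c hc => by
                      simp only [Finset.mem_filter] at hc
                      exact Finset.mem_range.2 hc.2
                  _ = L := Finset.card_range L
        · calc _ ≤ ∑ q ∈ Finset.Icc 1 k, if q ∈ Q then d ^ (k - 1) else 0 := by
                refine Finset.sum_le_sum fun q hq => ?_
                by_cases hqQ : q ∈ Q
                · simpa only [if_pos hqQ] using hg2 q (Finset.mem_Icc.1 hq).2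
                · simp only [if_neg hqQ, Finset.sum_const_zero, le_refl]
            _ ≤ _ := by
                rw [← Finset.sum_filter, Finset.sum_const, smul_eq_mul]
                refine Nat.mul_le_mul_right _ (le_trans (Finset.card_le_card fun q hq => ?_) hQc)
                exact (Finset.mem_filter.1 hq).2
    _ = _ := by ring

/-! ### Extensions of a word -/

/-- The words `s` of length `m` such that `a :: s` has distinct adjacent letters. -/
noncomputable def Ext {d : ℕ} : ℕ → Fin (d + 1) → Finset (List (Fin (d + 1)))
  | 0, _ => {[]}
  | m + 1, a => (Finset.univ.filter (· ≠ a)).biUnion fun b => (Ext m b).image (List.cons b)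

theorem mem_Ext {d m : ℕ} {a : Fin (d + 1)} {s : List (Fin (d + 1))} :
    s ∈ Ext m a ↔ s.length = m ∧ (a :: s).IsChain (· ≠ ·) := by
  induction m generalizing a s with
  | zero =>
    rw [Ext, Finset.mem_singleton]
    constructor
    · rintro rfl; simp
    · exact fun h => List.length_eq_zero_iff.1 h.1
  | succ m ih =>
    simp only [Ext, Finset.mem_biUnion, Finset.mem_filter, Finset.mem_univ, true_and,
      Finset.mem_image]
    constructor
    · rintro ⟨b, hb, s', hs', rfl⟩
      rw [ih] at hs'
      exact ⟨by simp [hs'.1], List.isChain_cons_cons.2 ⟨hb.symm, hs'.2⟩⟩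
    · rintro ⟨hl, hc⟩
      cases s with
      | nil => simp at hl
      | cons b s' =>
        rw [List.isChain_cons_cons] at hc
        exact ⟨b, hc.1.symm, s', ih.2 ⟨by simpa using hl, hc.2⟩, rfl⟩

theorem card_Ext {d : ℕ} (m : ℕ) (a : Fin (d + 1)) : (Ext m a).card = d ^ m := by
  induction m generalizing a with
  | zero => simp [Ext]
  | succ m ih =>
    rw [Ext, Finset.card_biUnion]
    · simp only [Finset.card_image_of_injective _ List.cons_injective, ih, Finset.sum_const,
        smul_eq_mul]
      rw [Finset.filter_ne', Finset.card_erase_of_mem (Finset.mem_univ _), Finset.card_univ,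
        Fintype.card_fin]
      simp [pow_succ, mul_comm]
    · intro x _ y _ hxy
      rw [Function.onFun, Finset.disjoint_left]
      intro l hx hy
      obtain ⟨_, _, rfl⟩ := Finset.mem_image.1 hx
      obtain ⟨_, _, h⟩ := Finset.mem_image.1 hy
      exact hxy (List.cons.inj h).1.symm

/-- Prescribing the first `δ` letters leaves at most `d ^ (m - δ)` extensions. -/
theorem card_Ext_filter_le {d : ℕ} (δ m : ℕ) (a : Fin (d + 1)) (r : ℕ → Fin (d + 1))
    (hδ : δ ≤ m) :
    ((Ext m a).filter fun s => ∀ i < δ, s[i]? = some (r i)).card ≤ d ^ (m - δ) := by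
  induction δ generalizing m a r with
  | zero => exact (Finset.card_filter_le _ _).trans (card_Ext _ _).le
  | succ δ ih =>
    obtain ⟨m, rfl⟩ : ∃ m', m = m' + 1 := ⟨m - 1, by omega⟩
    rw [Nat.add_sub_add_right]
    refine le_trans ?_ (ih m (r 0) (fun i => r (i + 1)) (by omega))
    refine Finset.card_le_card_of_injOn List.tail (fun s hs => ?_) ?_
    · simp only [Finset.coe_filter, Set.mem_ofPred_eq] at hs ⊢
      obtain ⟨hs, h⟩ := hs
      rw [mem_Ext] at hs ⊢
      cases s with
      | nil => simp at hs
      | cons b s =>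
        have h0 : b = r 0 := by simpa using h 0 (by omega)
        refine ⟨⟨by simpa using hs.1, ?_⟩, fun i hi => ?_⟩
        · rw [← h0]; exact (List.isChain_cons_cons.1 hs.2).2
        · simpa using h (i + 1) (by omega)
    · intro s hs s' hs' heq
      simp only [Finset.coe_filter, Set.mem_ofPred_eq] at hs hs'
      have h0 := hs.2 0 (by omega)
      have h0' := hs'.2 0 (by omega)
      cases s with
      | nil => simp at h0
      | cons b s =>
        cases s' with
        | nil => simp at h0'
        | cons b' s' => simp_all

/-- The word `⋯ p₂ p₁ v₀ ⋯ v_D s₁ s₂ ⋯`; the left extension `p` is read outwards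
from `v₀`. -/
def glue {α : Type*} (D : ℕ) (v : ℕ → α) (ps : List α × List α) : List α :=
  ps.1.reverse ++ ((List.range (D + 1)).map v ++ ps.2)

section glue

variable {d D : ℕ} {v : ℕ → Fin (d + 1)} {l r : ℕ} {ps : List (Fin (d + 1)) × List (Fin (d + 1))}

theorem glue_length (h : ps ∈ Ext l (v 0) ×ˢ Ext r (v D)) :
    (glue D v ps).length = l + (D + 1) + r := by
  rw [Finset.mem_product, mem_Ext, mem_Ext] at h
  simp [glue, h.1.1, h.2.1]; ring

theorem glue_mid (h : ps ∈ Ext l (v 0) ×ˢ Ext r (v D)) {i : ℕ} (hi : i ≤ D) :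
    (glue D v ps)[l + i]? = some (v i) := by
  rw [Finset.mem_product, mem_Ext, mem_Ext] at h
  rw [glue, List.getElem?_append_right (by simp [h.1.1]), List.getElem?_append_left
    (by simp [h.1.1]; omega)]
  simp [h.1.1, show i < D + 1 by omega]

theorem glue_right (h : ps ∈ Ext l (v 0) ×ˢ Ext r (v D)) (i : ℕ) :
    (glue D v ps)[l + (D + 1) + i]? = ps.2[i]? := by
  rw [Finset.mem_product, mem_Ext, mem_Ext] at h
  rw [glue, List.getElem?_append_right (by simp [h.1.1]; omega), List.getElem?_append_right
    (by simp [h.1.1]; omega)]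
  congr 1
  simp [h.1.1]; omega

theorem glue_left (h : ps ∈ Ext l (v 0) ×ˢ Ext r (v D)) {i : ℕ} (hi : i < l) :
    (glue D v ps)[l - 1 - i]? = ps.1[i]? := by
  rw [Finset.mem_product, mem_Ext, mem_Ext] at h
  rw [glue, List.getElem?_append_left (by simp [h.1.1]; omega), List.getElem?_reverse
    (by omega)]
  congr 1
  omega

theorem glue_chain (hv : SqFreeOn v D) (h : ps ∈ Ext l (v 0) ×ˢ Ext r (v D)) :
    (glue D v ps).IsChain (· ≠ ·) := by
  rw [Finset.mem_product, mem_Ext, mem_Ext] at h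
  obtain ⟨⟨-, h1⟩, -, h2⟩ := h
  have hw : ((List.range (D + 1)).map v).IsChain (· ≠ ·) := by
    rw [List.isChain_iff_getElem]
    intro i hi
    simp only [List.length_map, List.length_range] at hi
    simpa using hv.ne (i := i) (by omega)
  rw [List.isChain_cons] at h1 h2
  rw [glue, List.isChain_append, List.isChain_append]
  refine ⟨?_, ⟨hw, h2.2, ?_⟩, ?_⟩
  · rw [List.isChain_reverse]
    exact h1.2.imp fun _ _ h => h.symm
  · intro x hx y hy
    have : x = v D := by simpa [List.range_succ] using hx.symm
    exact this ▸ h2.1 y hy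
  · intro x hx y hy
    have hy' : y = v 0 := by simpa [List.range_succ_eq_map] using hy.symm
    have hx' : x ∈ ps.1.head? := by simpa using hx
    exact hy' ▸ (h1.1 x hx').symm

theorem glue_inj : Set.InjOn (glue D v) (Ext l (v 0) ×ˢ Ext r (v D) : Finset _) := by
  intro a ha b hb hab
  rw [Finset.mem_coe, Finset.mem_product, mem_Ext, mem_Ext] at ha hb
  have h1 := List.append_inj hab (by simp [ha.1.1, hb.1.1])
  exact Prod.ext (List.reverse_injective h1.1) (List.append_cancel_left h1.2)

end glue

/-- `z` contains a square of half-length `q` whose second half starts at position `D`. -/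
def SquareAt {α : Type*} (D : ℕ) (z : List α) (q : ℕ) : Prop :=
  ∀ i < q, z[D - q + i]? = z[D + i]?

/-- If a square centred at position `D` of the glued word sticks out on the left of `v₀ ⋯ v_D`,
it prescribes the last `q - c` letters before `v₀`, and a prefix of `v` recurs. The number
`c = D + 1 - t` is that of the letters of `v` before the centre. -/
theorem card_left {d D k t q : ℕ} {v : ℕ → Fin (d + 1)} (hk : k ≤ D) (ht : 1 ≤ t) (htk : t ≤ k)
    (hq : q ≤ k) (hcq : D + 1 - t < q) :
    ((Ext (t - 1) (v 0) ×ˢ Ext (k - t) (v D)).filter fun ps => SquareAt D (glue D v ps) q).card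
      ≤ if Match v D (D + 1 - t) q then d ^ (k - 1 - (q - (D + 1 - t))) else 0 := by
  split_ifs with hm
  · calc _ ≤ (((Ext (t - 1) (v 0)).filter fun s => ∀ i < q - (D + 1 - t),
            s[i]? = some (v (q - 1 - i))) ×ˢ Ext (k - t) (v D)).card := by
          refine Finset.card_le_card fun ps hps => ?_
          obtain ⟨h, hs⟩ := Finset.mem_filter.1 hps
          have h' := Finset.mem_product.1 h
          refine Finset.mem_product.2 ⟨Finset.mem_filter.2 ⟨h'.1, fun i hi => ?_⟩, h'.2⟩
          have e := hs (q - (D + 1 - t) - 1 - i) (by omega)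
          rw [← glue_left h (by omega), ← glue_mid h (i := q - 1 - i) (by omega)]
          convert e using 2 <;> omega
      _ ≤ d ^ (t - 1 - (q - (D + 1 - t))) * d ^ (k - t) := by
          rw [Finset.card_product, card_Ext]
          exact Nat.mul_le_mul_right _ (card_Ext_filter_le _ _ _ (fun i => v (q - 1 - i)) (by omega))
      _ = _ := by rw [← pow_add]; congr 1; omega
  · rw [Nat.le_zero, Finset.card_eq_zero, Finset.filter_eq_empty_iff]
    intro ps h hs
    refine hm fun j hj hjq => ?_
    have e := hs (t - 1 + j + q - D) (by omega)
    rw [show D - q + (t - 1 + j + q - D) = t - 1 + j by omega,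
      show D + (t - 1 + j + q - D) = t - 1 + (j + q) by omega, glue_mid h (by omega),
      glue_mid h (by omega)] at e
    exact Option.some.inj e

/-- The mirror image of `card_left`: there are `t` letters of `v₀ ⋯ v_D` after the centre. -/
theorem card_right {d D k t q : ℕ} {v : ℕ → Fin (d + 1)} (hk : k ≤ D) (ht : 1 ≤ t) (htk : t ≤ k)
    (hq : q ≤ k) (htq : t < q) :
    ((Ext (t - 1) (v 0) ×ˢ Ext (k - t) (v D)).filter fun ps => SquareAt D (glue D v ps) q).card
      ≤ if Match (fun j => v (D - j)) D t q then d ^ (k - 1 - (q - t)) else 0 := by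
  split_ifs with hm
  · calc _ ≤ (Ext (t - 1) (v 0) ×ˢ ((Ext (k - t) (v D)).filter fun s => ∀ i < q - t,
            s[i]? = some (v (D + 1 + i - q)))).card := by
          refine Finset.card_le_card fun ps hps => ?_
          obtain ⟨h, hs⟩ := Finset.mem_filter.1 hps
          have h' := Finset.mem_product.1 h
          refine Finset.mem_product.2 ⟨h'.1, Finset.mem_filter.2 ⟨h'.2, fun i hi => ?_⟩⟩
          have e := hs (t + i) (by omega)
          rw [← glue_right h, ← glue_mid h (i := D + 1 + i - q) (by omega)]
          convert e.symm using 2 <;> omega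
      _ ≤ d ^ (t - 1) * d ^ (k - t - (q - t)) := by
          rw [Finset.card_product, card_Ext]
          exact Nat.mul_le_mul_left _
            (card_Ext_filter_le _ _ _ (fun i => v (D + 1 + i - q)) (by omega))
      _ = _ := by rw [← pow_add]; congr 1; omega
  · rw [Nat.le_zero, Finset.card_eq_zero, Finset.filter_eq_empty_iff]
    intro ps h hs
    refine hm fun j hj hjq => ?_
    have e := hs (t - 1 - j) (by omega)
    rw [show D - q + (t - 1 - j) = t - 1 + (D - (j + q)) by omega,
      show D + (t - 1 - j) = t - 1 + (D - j) by omega, glue_mid h (by omega),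
      glue_mid h (by omega)] at e
    exact (Option.some.inj e).symm

/-- `z` has no square with second half starting at position `D` and half-length at most `k`. -/
def NoSquareAt {α : Type*} (D k : ℕ) (z : List α) : Prop :=
  ∀ q, 1 ≤ q → q ≤ k → ¬ SquareAt D z q

/-- All but few of the `d ^ (k - 1)` ways of extending `v₀ ⋯ v_D` by `t - 1` letters on the left
and `k - t` letters on the right avoid squares centred at position `D`. -/
theorem card_good {d D k t : ℕ} {v : ℕ → Fin (d + 1)} (hk : k ≤ D) (ht : 1 ≤ t) (htk : t ≤ k)
    (hv : SqFreeOn v D) :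
    d ^ (k - 1) ≤ ((Ext (t - 1) (v 0) ×ˢ Ext (k - t) (v D)).filter fun ps =>
        NoSquareAt D k (glue D v ps)).card
      + (loss d D k v (D + 1 - t) + loss d D k (fun j => v (D - j)) t) := by
  set X := Ext (t - 1) (v 0) ×ˢ Ext (k - t) (v D) with hX
  have hXc : X.card = d ^ (k - 1) := by
    rw [hX, Finset.card_product, card_Ext, card_Ext, ← pow_add]; congr 1; omega
  rw [← hXc, ← Finset.card_filter_add_card_filter_not
    (p := fun ps => NoSquareAt D k (glue D v ps))]
  refine Nat.add_le_add_left ?_ _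
  calc _ ≤ ((Finset.Icc 1 k).biUnion fun q =>
          X.filter fun ps => SquareAt D (glue D v ps) q).card := by
        refine Finset.card_le_card fun ps hps => ?_
        obtain ⟨h, hs⟩ := Finset.mem_filter.1 hps
        rw [NoSquareAt] at hs
        push Not at hs
        obtain ⟨q, h1, h2, h3⟩ := hs
        exact Finset.mem_biUnion.2 ⟨q, Finset.mem_Icc.2 ⟨h1, h2⟩, Finset.mem_filter.2 ⟨h, h3⟩⟩
    _ ≤ ∑ q ∈ Finset.Icc 1 k, (X.filter fun ps => SquareAt D (glue D v ps) q).card :=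
        Finset.card_biUnion_le
    _ ≤ _ := by
        rw [loss, loss, ← Finset.sum_add_distrib]
        refine Finset.sum_le_sum fun q hq => ?_
        obtain ⟨hq1, hqk⟩ := Finset.mem_Icc.1 hq
        by_cases h1 : D + 1 - t < q
        · have := card_left (v := v) hk ht htk hqk h1
          simp only [h1, true_and]
          exact this.trans (Nat.le_add_right _ _)
        by_cases h2 : t < q
        · have := card_right (v := v) hk ht htk hqk h2
          simp only [h2, true_and]
          exact this.trans (Nat.le_add_left _ _)
        -- Here the square lies inside `v₀ ⋯ v_D`.
        refine le_of_eq_of_le ?_ (Nat.zero_le _)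
        rw [Finset.card_eq_zero, Finset.filter_eq_empty_iff]
        intro ps h hs
        obtain ⟨i, hi, hne⟩ := hv (D + 1 - t - q) q hq1 (by omega)
        have e := hs i hi
        rw [show D - q + i = t - 1 + (D + 1 - t - q + i) by omega,
          show D + i = t - 1 + (D + 1 - t - q + q + i) by omega, glue_mid h (by omega),
          glue_mid h (by omega)] at e
        exact hne (Option.some.inj e)

/-! ### Walks as words -/

theorem Vertex.ext_word {d D : ℕ} {x y : Vertex d D} (h : x.word = y.word) : x = y := by
  cases x; cases y; simp_all

instance (d D : ℕ) : Finite (Vertex d D) := by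
  have := (List.finite_length_eq (Fin (d + 1)) D).to_subtype
  exact Finite.of_injective
    (fun x : Vertex d D => (⟨x.word, x.length_eq⟩ : {l : List (Fin (d + 1)) | l.length = D}))
    fun x y h => Vertex.ext_word (congrArg Subtype.val h)

/-- A walk of length `m` shifts the word of a vertex by `m` letters. -/
theorem walk_shift {d D : ℕ} (m : ℕ) (p : List (Vertex d D)) {x y : Vertex d D}
    (h : IsWalk p x y) (hp : p.length = m + 1) (i : ℕ) (hi : m + i < D) :
    x.word[m + i]? = y.word[i]? := by
  induction m generalizing p x with
  | zero =>
    obtain ⟨a, rfl⟩ := List.length_eq_one_iff.1 hp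
    obtain ⟨h1, h2, -⟩ := h
    simp only [List.head?_cons, List.getLast?_singleton, Option.some.injEq] at h1 h2
    simp [← h1, ← h2]
  | succ m ih =>
    obtain ⟨h1, h2, h3⟩ := h
    match p, hp with
    | a :: b :: p, hp =>
      obtain ⟨hab, hc⟩ := List.isChain_cons_cons.1 h3
      have e := ih (b :: p) (x := b) ⟨rfl, by simpa using h2, hc⟩ (by simpa using hp) (by omega)
      obtain rfl : a = x := by simpa using h1
      obtain ⟨w, hw, -, ha, hb⟩ := hab
      rw [← e, ha, hb, List.getElem?_tail, List.getElem?_dropLast, if_pos (by omega)]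
      congr 1; omega

/-- The vertex with word `l`, and `x₀` if `l` is not the word of a vertex. -/
noncomputable def toVertex {d D : ℕ} (x₀ : Vertex d D) (l : List (Fin (d + 1))) : Vertex d D :=
  if h : l.length = D ∧ l.IsChain (· ≠ ·) then ⟨l, h.1, h.2⟩ else x₀

/-- The vertex read in the window of length `D` of `z` starting at position `i`. -/
noncomputable def window {d D : ℕ} (x₀ : Vertex d D) (z : List (Fin (d + 1))) (i : ℕ) :
    Vertex d D :=
  toVertex x₀ ((z.drop i).take D)

section window

variable {d D k : ℕ} (x₀ : Vertex d D) {z : List (Fin (d + 1))}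

theorem window_word (hz : z.length = D + k) (hc : z.IsChain (· ≠ ·)) {i : ℕ} (hi : i ≤ k) :
    (window x₀ z i).word = (z.drop i).take D := by
  rw [window, toVertex, dif_pos ⟨by simp; omega, (hc.drop i).take D⟩]

theorem window_getElem (hz : z.length = D + k) (hc : z.IsChain (· ≠ ·)) {i : ℕ} (hi : i ≤ k)
    {j : ℕ} (hj : j < D) : (window x₀ z i).word[j]? = z[i + j]? := by
  rw [window_word x₀ hz hc hi, List.getElem?_take_of_lt hj, List.getElem?_drop]

theorem window_adj (hz : z.length = D + k) (hc : z.IsChain (· ≠ ·)) {i : ℕ} (hi : i + 1 ≤ k) :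
    Adj (window x₀ z i) (window x₀ z (i + 1)) := by
  refine ⟨(z.drop i).take (D + 1), by simp; omega, (hc.drop i).take _, ?_, ?_⟩
  · rw [window_word x₀ hz hc (by omega), List.dropLast_eq_take, List.take_take]
    congr 1; simp; omega
  · rw [window_word x₀ hz hc hi]
    apply List.ext_getElem?
    intro j
    rw [List.getElem?_tail, List.getElem?_take, List.getElem?_take, List.getElem?_drop,
      List.getElem?_drop]
    simp only [Nat.add_lt_add_iff_right]
    rw [show i + 1 + j = i + (j + 1) by ring]

theorem window_walk (hz : z.length = D + k) (hc : z.IsChain (· ≠ ·)) :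
    IsWalk ((List.range (k + 1)).map (window x₀ z)) (window x₀ z 0) (window x₀ z k) := by
  refine ⟨by simp [List.range_succ_eq_map], by simp [List.range_succ], ?_⟩
  refine List.isChain_iff_getElem.2 fun i hi => ?_
  simp only [List.length_map, List.length_range] at hi
  simpa using window_adj x₀ hz hc (i := i) (by omega)

/-- A shorter walk between the first and last windows would produce a square at position `D`. -/
theorem window_dist (hk : k ≤ D) (hz : z.length = D + k) (hc : z.IsChain (· ≠ ·))
    (hs : NoSquareAt D k z) : dist (window x₀ z 0) (window x₀ z k) = k := by
  have hmem : k ∈ {m | ∃ p : List (Vertex d D),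
      IsWalk p (window x₀ z 0) (window x₀ z k) ∧ p.length = m + 1} :=
    ⟨_, window_walk x₀ hz hc, by simp⟩
  refine le_antisymm (Nat.sInf_le hmem) (not_lt.1 fun hlt => ?_)
  obtain ⟨p, hp, hl⟩ := Nat.sInf_mem ⟨k, hmem⟩
  change p.length = dist (window x₀ z 0) (window x₀ z k) + 1 at hl
  set m := dist (window x₀ z 0) (window x₀ z k)
  refine hs (k - m) (by omega) (by omega) fun i hi => ?_
  have e := walk_shift m p hp hl (D - k + i) (by omega)
  rw [window_getElem x₀ hz hc (by omega) (by omega),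
    window_getElem x₀ hz hc le_rfl (by omega)] at e
  convert e using 2 <;> omega

theorem window_inj (hk : k ≤ D) {z' : List (Fin (d + 1))} (hz : z.length = D + k)
    (hc : z.IsChain (· ≠ ·)) (hz' : z'.length = D + k) (hc' : z'.IsChain (· ≠ ·))
    (h0 : window x₀ z 0 = window x₀ z' 0) (h1 : window x₀ z k = window x₀ z' k) : z = z' := by
  apply List.ext_getElem?
  intro j
  by_cases hj : j < D
  · have := window_getElem x₀ hz hc (Nat.zero_le _) hj
    rw [h0, window_getElem x₀ hz' hc' (Nat.zero_le _) hj] at this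
    simpa using this.symm
  · by_cases hj2 : j < D + k
    · have := window_getElem x₀ hz hc le_rfl (j := j - k) (by omega)
      rw [h1, window_getElem x₀ hz' hc' le_rfl (by omega)] at this
      rw [show k + (j - k) = j by omega] at this
      exact this.symm
    · rw [List.getElem?_eq_none (by omega), List.getElem?_eq_none (by omega)]

end window

/-- The edge with edge-word `v₀ ⋯ v_D`. -/
theorem exists_edge {d D : ℕ} {v : ℕ → Fin (d + 1)} (hv : SqFreeOn v D) :
    ∃ e : Edge d D, e.src.word = (List.range D).map v ∧
      e.tgt.word = (List.range D).map fun i => v (i + 1) := by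
  have hc : ((List.range (D + 1)).map v).IsChain (· ≠ ·) := by
    refine List.isChain_iff_getElem.2 fun i hi => ?_
    simp only [List.length_map, List.length_range] at hi
    simpa using hv.ne (i := i) (by omega)
  have h1 : ((List.range (D + 1)).map v).dropLast = (List.range D).map v := by
    simp [List.range_succ]
  have h2 : ((List.range (D + 1)).map v).tail = (List.range D).map fun i => v (i + 1) := by
    simp [List.range_succ_eq_map, Function.comp_def]
  exact ⟨⟨⟨(List.range D).map v, by simp, h1 ▸ hc.dropLast⟩,
    ⟨(List.range D).map fun i => v (i + 1), by simp, h2 ▸ hc.tail⟩,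
    (List.range (D + 1)).map v, by simp, hc, h1.symm, h2.symm⟩, rfl, rfl⟩

/-- Each extension of the edge-word without squares at position `D` gives, through its first and
last windows, a pair of vertices at distance `k` whose geodesic has `e` as its `t`-th edge. -/
theorem pow_le_N_add {d D k t : ℕ} {v : ℕ → Fin (d + 1)} (hk : k ≤ D) (ht : 1 ≤ t) (htk : t ≤ k)
    (hv : SqFreeOn v D) (e : Edge d D) (hsrc : e.src.word = (List.range D).map v)
    (htgt : e.tgt.word = (List.range D).map fun i => v (i + 1)) :
    d ^ (k - 1) ≤ N e k t +
      (loss d D k v (D + 1 - t) + loss d D k (fun j => v (D - j)) t) := by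
  refine (card_good hk ht htk hv).trans (Nat.add_le_add_right ?_ _)
  rw [N, ← Set.ncard_coe_finset]
  have hlen : ∀ ps ∈ Ext (t - 1) (v 0) ×ˢ Ext (k - t) (v D), (glue D v ps).length = D + k :=
    fun ps h => by rw [glue_length h]; omega
  refine Set.ncard_le_ncard_of_injOn
    (fun ps => (window e.src (glue D v ps) 0, window e.src (glue D v ps) k)) ?_ ?_
    (Set.toFinite _)
  · intro ps hps
    obtain ⟨h, hs⟩ := Finset.mem_filter.1 (Finset.mem_coe.1 hps)
    have hz := hlen ps h
    have hc := glue_chain hv h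
    refine ⟨window_dist e.src hk hz hc hs, _, window_walk e.src hz hc, by simp, ?_, ?_⟩
    · rw [List.getElem?_map, List.getElem?_range (by omega)]
      refine congrArg some (Vertex.ext_word (List.ext_getElem? fun j => ?_))
      by_cases hj : j < D
      · rw [window_getElem e.src hz hc (by omega) hj, glue_mid h hj.le, hsrc]
        simp [hj]
      · rw [List.getElem?_eq_none (by rw [Vertex.length_eq]; omega),
          List.getElem?_eq_none (by rw [Vertex.length_eq]; omega)]
    · rw [List.getElem?_map, List.getElem?_range (by omega)]
      refine congrArg some (Vertex.ext_word (List.ext_getElem? fun j => ?_))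
      by_cases hj : j < D
      · rw [window_getElem e.src hz hc htk hj, show t + j = t - 1 + (j + 1) by omega,
          glue_mid h (by omega), htgt]
        simp [hj]
      · rw [List.getElem?_eq_none (by rw [Vertex.length_eq]; omega),
          List.getElem?_eq_none (by rw [Vertex.length_eq]; omega)]
  · intro ps hps ps' hps' heq
    have h := (Finset.mem_filter.1 (Finset.mem_coe.1 hps)).1
    have h' := (Finset.mem_filter.1 (Finset.mem_coe.1 hps')).1
    obtain ⟨h0, h1⟩ := Prod.mk.inj heq
    exact glue_inj (Finset.mem_coe.2 h) (Finset.mem_coe.2 h')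
      (window_inj e.src hk (hlen _ h) (glue_chain hv h) (hlen _ h') (glue_chain hv h') h0 h1)

theorem mul_pow_le_U_add {d D k : ℕ} {v : ℕ → Fin (d + 1)} (hd : 2 ≤ d) (hk : k ≤ D)
    (hv : SqFreeOn v D) (e : Edge d D) (hsrc : e.src.word = (List.range D).map v)
    (htgt : e.tgt.word = (List.range D).map fun i => v (i + 1)) (L : ℕ) (hL : 1 ≤ L) :
    k * d ^ (k - 1) ≤ U e k + 2 * ((D / L + 1 + 2 * L) * d ^ (k - 1)) := by
  have h1 : ∑ t ∈ Finset.Icc 1 k, loss d D k v (D + 1 - t) ≤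
      (D / L + 1 + 2 * L) * d ^ (k - 1) := by
    refine le_trans ?_ (sum_loss_le hd hk hv L hL)
    rw [← Finset.sum_image (f := fun c => loss d D k v c) (g := fun t => D + 1 - t)]
    · refine Finset.sum_le_sum_of_subset fun c hc => ?_
      obtain ⟨t, ht, rfl⟩ := Finset.mem_image.1 hc
      rw [Finset.mem_Icc] at ht ⊢
      omega
    · intro a ha b hb hab
      simp only [Finset.coe_Icc, Set.mem_Icc] at ha hb
      simp only at hab
      omega
  have h2 : ∑ t ∈ Finset.Icc 1 k, loss d D k (fun j => v (D - j)) t ≤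
      (D / L + 1 + 2 * L) * d ^ (k - 1) :=
    (Finset.sum_le_sum_of_subset (Finset.Icc_subset_Icc le_rfl hk)).trans
      (sum_loss_le hd hk hv.reverse L hL)
  calc k * d ^ (k - 1) = ∑ t ∈ Finset.Icc 1 k, d ^ (k - 1) := by simp
    _ ≤ ∑ t ∈ Finset.Icc 1 k, (N e k t +
        (loss d D k v (D + 1 - t) + loss d D k (fun j => v (D - j)) t)) :=
        Finset.sum_le_sum fun t ht => pow_le_N_add hk (Finset.mem_Icc.1 ht).1
          (Finset.mem_Icc.1 ht).2 hv e hsrc htgt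
    _ ≤ _ := by
        rw [Finset.sum_add_distrib, Finset.sum_add_distrib, U]
        omega

end Kautz

/-- For every integer `d ≥ 2` there exists `D₀` such that for all `D ≥ D₀`,
the Kautz digraph `K(d,D)` contains a directed edge `e` whose shortest-path
congestion satisfies `cong(e) > τ(d,D)`. -/
theorem statement0 :
    ∀ d : ℕ, 2 ≤ d → ∃ D₀ : ℕ, ∀ D : ℕ, D₀ ≤ D →
      ∃ e : Kautz.Edge d D, Kautz.tau d D < Kautz.cong e := by
  intro d hd
  refine ⟨1000 * d ^ 4, fun D hD => ?_⟩
  obtain ⟨v, hv⟩ := Kautz.exists_sqFree d hd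
  obtain ⟨e, hsrc, htgt⟩ := Kautz.exists_edge (hv D)
  refine ⟨e, ?_⟩
  have hd2 : 4 ≤ d ^ 2 := by nlinarith
  have hd4 : 4 * d ^ 2 ≤ d ^ 4 := by
    rw [show d ^ 4 = d ^ 2 * d ^ 2 by ring]
    exact Nat.mul_le_mul_right _ hd2
  obtain ⟨n, rfl⟩ : ∃ n, D = n + 3 := ⟨D - 3, by omega⟩
  -- With this recurrence length the total loss over `k = D, D - 1, D - 2` is at most about
  -- `D * d ^ (D - 3) / 3`, less than the main term `(D - 2) * d ^ (D - 3)` of `U e (D - 2)`.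
  set L := 12 * d ^ 2 with hL
  have hU := fun k hk => Kautz.mul_pow_le_U_add (k := k) hd hk (hv _) e hsrc htgt L (by omega)
  have h1 := hU (n + 1) (by omega)
  have h2 := hU (n + 2) (by omega)
  have h3 := hU (n + 3) (by omega)
  have r2 : Kautz.U e (n + 1 + 1) = Kautz.U e (n + 2) := rfl
  have r3 : Kautz.U e (n + 2 + 1) = Kautz.U e (n + 3) := rfl
  have hcong : Kautz.U e (n + 1) + Kautz.U e (n + 2) + Kautz.U e (n + 3) ≤ Kautz.cong e := by
    rw [Kautz.cong, Finset.sum_Icc_succ_top (by omega), Finset.sum_Icc_succ_top (by omega),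
      Finset.sum_Icc_succ_top (by omega)]
    omega
  set B := (n + 3) / L + 1 + 2 * L with hB
  simp only [Nat.add_sub_cancel, show n + 2 - 1 = n + 1 by omega,
    show n + 3 - 1 = n + 2 by omega] at h1 h2 h3
  have hBn : 2 * (B * (d ^ 2 + d + 1)) < n + 1 := by
    have hq : L * ((n + 3) / L) ≤ n + 3 := Nat.mul_div_le _ _
    have hdd : d ^ 2 + d + 1 ≤ 2 * d ^ 2 := by nlinarith
    have : B * (d ^ 2 + d + 1) ≤ B * (2 * d ^ 2) := Nat.mul_le_mul_left _ hdd
    have e2 : 6 * (B * (2 * d ^ 2)) = L * ((n + 3) / L) + L + 2 * (L * L) := by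
      rw [hB, show 6 * (((n + 3) / L + 1 + 2 * L) * (2 * d ^ 2))
        = 12 * d ^ 2 * ((n + 3) / L + 1 + 2 * L) by ring, ← hL]
      ring
    have e3 : L * L = 144 * d ^ 4 := by rw [hL]; ring
    nlinarith
  have hmul : 2 * (B * (d ^ 2 + d + 1)) * d ^ n < (n + 1) * d ^ n :=
    Nat.mul_lt_mul_of_pos_right hBn (by positivity)
  have hsplit : 2 * (B * (d ^ 2 + d + 1)) * d ^ n =
      2 * (B * d ^ n) + 2 * (B * d ^ (n + 1)) + 2 * (B * d ^ (n + 2)) := by ring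
  rw [Kautz.tau, show n + 3 - 1 = n + 2 by omega, show n + 3 - 2 = n + 1 by omega]
  omega
end

section
/- Fix an integer d ≥ 2 and let D be an integer with D ≥ (8d² + 2d − 1)/(d − 1). If e is a directed edge of K(d,D) whose edge-word w(e) is an unbordered 7/4⁺-power-free ternary word, then cong(e) > τ(d,D). -/
/-!
A walk of length `k ≤ D` using `e` as its `t`-th edge is the same thing as a word `L w R` with
`w = w(e)`, `|L| = t - 1`, `|R| = k - t`, so there are `d ^ (k - 1)` of them. Such a walk fails to
be a geodesic exactly when its end vertices are joined by a walk of length `k - p` for some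
`1 ≤ p ≤ k`, which means that the factor of `L w R` in the positions `k - p, …, D + p - 1` has
period `p` (`Rep`).

Since `w` is unbordered this factor cannot contain `w`, and since its length `D - k + 2 p` is at
least `2 p` it cannot lie inside `w`. So it runs off `w` on exactly one side (`rep_period_le`,
`rep_right`). If it ends in `R`, its part in `w` has length `D - k + t + p`, so power-freeness gives
`4 (D - k + t) ≤ 3 p`, and the first `p - t` letters of `R` are forced by `w`; hence at most
`d ^ (k - 1 - (p - t))` words are lost (`card_rep_le`). The other side follows by reversing words.

It remains to sum. With `c = D - k` and `m = p - t - c` a loss is `d ^ (D - 1 - 2 c - m)`, and for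
given `c`, `m` the inequality forces `m < p ≤ 4 m`, so there are at most `3 m` terms. The two
sides together lose at most
`2 d ^ (D - 1) · (∑ d ^ (-2 c)) · (∑ 3 m d ^ (-m)) ≤ 6 d ^ (D + 2) / ((d - 1) ^ 2 (d ^ 2 - 1))`,
while `∑_{k ≤ D} k d ^ (k - 1)` exceeds `τ(d, D)` by
`∑_{k ≤ D - 2} k d ^ (k - 1) ≥ (8 d ^ D + 1) / (d - 1) ^ 2` thanks to the lower bound on `D`.
Since `6 d ^ 2 ≤ 8 (d ^ 2 - 1)` for `d ≥ 2`, the excess is strictly larger (`two_sum_F_lt`).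
-/

open scoped BigOperators Classical

namespace KautzCong

open Kautz

/-! ### Extensions of a word to the right -/

/-- The word obtained from the list of choices `l` by walking away from the letter `a`: each entry
of `l` selects, through `Fin.succAbove`, one of the `d` letters different from the previous one.
The starting letter `a` is not included. -/
def ext {d : ℕ} : Fin (d + 1) → List (Fin d) → List (Fin (d + 1))
  | _, [] => []
  | a, i :: l => a.succAbove i :: ext (a.succAbove i) l

theorem ext_length {d : ℕ} (l : List (Fin d)) : ∀ a, (ext a l).length = l.length := by
  induction l with
  | nil => intro a; rfl
  | cons i l ih => intro a; simp [ext, ih]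

theorem ext_chain {d : ℕ} (l : List (Fin d)) : ∀ a, (a :: ext a l).IsChain (· ≠ ·) := by
  induction l with
  | nil => intro a; simp [ext]
  | cons i l ih =>
    intro a
    rw [ext, List.isChain_cons_cons]
    exact ⟨(Fin.succAbove_ne a i).symm, ih _⟩

theorem ext_take {d : ℕ} (l : List (Fin d)) : ∀ a q, (ext a l).take q = ext a (l.take q) := by
  induction l with
  | nil => intro a q; simp [ext]
  | cons i l ih =>
    intro a q
    cases q with
    | zero => simp [ext]
    | succ q => simp [ext, ih]

theorem ext_injective {d : ℕ} (l : List (Fin d)) : ∀ a l', ext a l = ext a l' → l = l' := by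
  induction l with
  | nil => intro a l' h; cases l' with
    | nil => rfl
    | cons i l' => simp [ext] at h
  | cons i l ih =>
    intro a l' h
    cases l' with
    | nil => simp [ext] at h
    | cons i' l' =>
      simp only [ext, List.cons.injEq] at h
      obtain ⟨h1, h2⟩ := h
      have h3 := Fin.succAbove_right_injective h1
      subst h3
      rw [ih _ _ h2]

/-- Prescribing the first `q` letters of an extension of length `b` leaves at most `d ^ (b - q)`
extensions. -/
theorem card_ext_take_le {d b : ℕ} (a : Fin (d + 1)) (q : ℕ)
    (c : List (Fin (d + 1))) :
    (Finset.univ.filter fun v : List.Vector (Fin d) b => (ext a v.1).take q = c).card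
      ≤ d ^ (b - q) := by
  have hcard : (Finset.univ : Finset (List.Vector (Fin d) (b - q))).card = d ^ (b - q) := by
    rw [Finset.card_univ, card_vector, Fintype.card_fin]
  rw [← hcard]
  refine Finset.card_le_card_of_injOn
    (fun v => (⟨v.1.drop q, by simp⟩ : List.Vector (Fin d) (b - q))) (fun _ _ => Finset.mem_coe.2 (Finset.mem_univ _)) ?_
  intro v hv v' hv' h
  simp only [Finset.coe_filter, Finset.mem_univ, true_and, Set.mem_ofPred_eq] at hv hv'
  have h1 : v.1.drop q = v'.1.drop q := congrArg Subtype.val h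
  have h2 : v.1.take q = v'.1.take q := by
    apply ext_injective _ a
    rw [← ext_take, ← ext_take, hv, hv']
  apply Subtype.ext
  rw [← List.take_append_drop q v.1, h1, h2, List.take_append_drop]

/-! ### Repetitions straddling a word -/

/-- `Rep z D k p` says that the factor of `z` occupying the positions `k - p, …, D + p - 1` has
period `p`.  When `z` has length `D + k`, this is the condition that the first and the last `D`
letters of `z` are joined by a walk of length `k - p`. -/
def Rep {α : Type*} (z : List α) (D k p : ℕ) : Prop :=
  ∀ i, k - p ≤ i → i < D → z[i]? = z[i + p]?

/-- The two consequences of the hypotheses on the edge-word: no period at most `D`, and every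
factor of period `p` and length `n ≥ p` satisfies `n ≤ 7 p / 4`. Stated through periods, both
conditions are invariant under reversal of `w`. -/
structure Good {α : Type*} (w : List α) (D : ℕ) : Prop where
  length : w.length = D + 1
  unb : ∀ p, 1 ≤ p → p ≤ D → ¬ ∀ i, i + p ≤ D → w[i]? = w[i + p]?
  exp : ∀ s n p, 1 ≤ p → p ≤ n → s + n ≤ D + 1 →
    (∀ i, s ≤ i → i + p < s + n → w[i]? = w[i + p]?) → 4 * n ≤ 7 * p

theorem Good.reverse {α : Type*} {w : List α} {D : ℕ} (h : Good w D) : Good w.reverse D := by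
  have key : ∀ i, i ≤ D → w.reverse[i]? = w[D - i]? := by
    intro i hi
    rw [List.getElem?_reverse (by rw [h.length]; omega), h.length]
    congr 1
  refine ⟨by rw [List.length_reverse, h.length], ?_, ?_⟩
  · intro p hp hpD hper
    refine h.unb p hp hpD fun i hi => ?_
    have := hper (D - (i + p)) (by omega)
    rw [key _ (by omega), key _ (by omega)] at this
    rw [show D - (D - (i + p)) = i + p by omega,
      show D - (D - (i + p) + p) = i by omega] at this
    exact this.symm
  · intro s n p hp hpn hs hper
    refine h.exp (D + 1 - (s + n)) n p hp hpn (by omega) fun i hi hi' => ?_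
    have := hper (D - (i + p)) (by omega) (by omega)
    rw [key _ (by omega), key _ (by omega)] at this
    rw [show D - (D - (i + p)) = i + p by omega,
      show D - (D - (i + p) + p) = i by omega] at this
    exact this.symm

theorem good_of_hyp {α : Type*} {w : List α} {D : ℕ} (hw : w.length = D + 1)
    (hub : Unbordered w) (h74 : SevenFourthsPlusFree w) : Good w D := by
  refine ⟨hw, ?_, ?_⟩
  · intro p hp hpD hper
    refine hub ⟨D + 1 - p, by omega, by omega, ?_⟩
    apply List.ext_getElem?
    intro i
    rw [List.getElem?_take, List.getElem?_drop, hw, show D + 1 - (D + 1 - p) + i = i + p by omega]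
    split_ifs with hi
    · exact hper i (by omega)
    · rw [List.getElem?_eq_none]; omega
  · intro s n p hp hpn hs hper
    by_contra hlt
    -- Truncating the factor to length `min n (2 * p)` keeps the exponent above `7 / 4`,
    -- and the truncated factor has the form `x ++ y` with `y` a prefix of `x`.
    obtain ⟨r, hr1, hr2, hr3⟩ : ∃ r, r ≤ p ∧ p + r ≤ n ∧ 7 * p < 4 * (p + r) :=
      ⟨min (n - p) p, by omega, by omega, by omega⟩
    have hlen : ((w.drop s).take p).length = p := by simp; omega
    have hy : (w.drop (s + p)).take r = (w.drop s).take r := by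
      apply List.ext_getElem?
      intro i
      rw [List.getElem?_take, List.getElem?_take, List.getElem?_drop, List.getElem?_drop]
      split_ifs with hi
      · rw [hper (s + i) (by omega) (by omega)]; congr 1; omega
      · rfl
    refine h74 ⟨(w.drop s).take p, (w.drop (s + p)).take r, 1, ?_, le_rfl, ?_, ?_, ?_⟩
    · intro h0; rw [h0] at hlen; simp at hlen; omega
    · rw [hy]; exact List.take_prefix_take_left hr1
    · have : (List.replicate 1 ((w.drop s).take p)).flatten ++ (w.drop (s + p)).take r
          = (w.drop s).take (p + r) := by
        simp [List.take_add, List.drop_drop]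
      rw [this]
      exact (List.take_prefix _ _).isInfix.trans (List.drop_suffix _ _).isInfix
    · rw [hlen, List.length_take, List.length_drop, hw]; omega

theorem Rep.reverse {α : Type*} {z : List α} {D k p : ℕ} (hz : z.length = D + k) (hp : p ≤ k)
    (h : Rep z D k p) : Rep z.reverse D k p := by
  intro i hi hiD
  have := h (D + k - 1 - (i + p)) (by omega) (by omega)
  rw [List.getElem?_reverse (by omega), List.getElem?_reverse (by omega), hz, this]
  congr 1
  omega

/-- A repetition in `L ++ w ++ R` of period `p ≤ R.length` must end inside `R`, so that
`t := L.length + 1 < p`; its part inside `w ++ R` forces the first `p - t` letters of `R`. -/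
theorem rep_right {α : Type*} {w L R : List α} {D k p : ℕ} (hw : Good w D)
    (hk : L.length + R.length + 1 = k) (hkD : k ≤ D) (hp1 : 1 ≤ p) (hpR : p ≤ R.length)
    (h : Rep (L ++ w ++ R) D k p) :
    L.length + 1 < p ∧ 4 * (D - R.length) ≤ 3 * p ∧
      R.take (p - (L.length + 1)) = (w.drop (D + 1 - p)).take (p - (L.length + 1)) := by
  have hl := hw.length
  have hin : ∀ i, i ≤ D → (L ++ w ++ R)[L.length + i]? = w[i]? := by
    intro i hi
    rw [List.append_assoc, List.getElem?_append_right (by omega),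
      List.getElem?_append_left (by omega)]
    congr 1; omega
  have hper : ∀ i, R.length + 1 - p ≤ i → i + p ≤ D → L.length + i < D → w[i]? = w[i + p]? := by
    intro i hi hi' hi''
    have := h (L.length + i) (by omega) hi''
    rwa [hin i (by omega), add_assoc, hin (i + p) hi'] at this
  have h1 : L.length + 1 < p := by
    by_contra hcon
    have := hw.exp (R.length + 1 - p) (D - k + 2 * p) p hp1 (by omega) (by omega)
      (fun i hi hi' => hper i hi (by omega) (by omega))
    omega
  refine ⟨h1, ?_, ?_⟩
  · have := hw.exp (R.length + 1 - p) (D - R.length + p) p hp1 (by omega) (by omega)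
      (fun i hi hi' => hper i hi (by omega) (by omega))
    omega
  · apply List.ext_getElem?
    intro i
    rw [List.getElem?_take, List.getElem?_take, List.getElem?_drop]
    split_ifs with hi
    · have := h (L.length + (D + 1 - p + i)) (by omega) (by omega)
      rw [hin _ (by omega), List.getElem?_append_right (by simp; omega)] at this
      rw [this]
      congr 1
      simp
      omega
    · rfl

/-- A repetition around an unbordered word cannot have a period exceeding the lengths of both
extensions, since it would cover the whole word. -/
theorem rep_period_le {α : Type*} {w L R : List α} {D k p : ℕ} (hw : Good w D)
    (hk : L.length + R.length + 1 = k) (hkD : k ≤ D) (hp1 : 1 ≤ p) (hpk : p ≤ k)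
    (h : Rep (L ++ w ++ R) D k p) : p ≤ R.length ∨ p ≤ L.length := by
  by_contra hcon
  have hl := hw.length
  have hin : ∀ i, i ≤ D → (L ++ w ++ R)[L.length + i]? = w[i]? := by
    intro i hi
    rw [List.append_assoc, List.getElem?_append_right (by omega),
      List.getElem?_append_left (by omega)]
    congr 1; omega
  refine hw.unb p hp1 (by omega) fun i hi => ?_
  have := h (L.length + i) (by omega) (by omega)
  rwa [hin i (by omega), add_assoc, hin (i + p) hi] at this

/-! ### Walks and distances -/

theorem vertex_ext {d D : ℕ} {u v : Vertex d D} (h : u.word = v.word) : u = v := by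
  cases u; cases v; simp only at h; subst h; rfl

instance vertexFinite (d D : ℕ) : Finite (Vertex d D) :=
  have : Finite (List.Vector (Fin (d + 1)) D) := inferInstance
  Finite.of_injective (β := List.Vector (Fin (d + 1)) D) (fun v : Vertex d D => ⟨v.word, v.length_eq⟩)
    fun _ _ h => vertex_ext (congrArg Subtype.val h)

theorem adj_shift {d D : ℕ} {u v : Vertex d D} (h : Adj u v) (i : ℕ) (hi : i + 1 < D) :
    v.word[i]? = u.word[i + 1]? := by
  obtain ⟨w, hw, -, hu, hv⟩ := h
  rw [hu, hv, List.getElem?_tail, List.getElem?_dropLast, if_pos (by omega)]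

theorem edge_word {d D : ℕ} (hD : 1 ≤ D) (e : Edge d D) :
    e.word.length = D + 1 ∧ e.word.IsChain (· ≠ ·) ∧ e.word.take D = e.src.word ∧
      e.word.drop 1 = e.tgt.word := by
  obtain ⟨w, hw, hc, hu, hv⟩ := e.adj
  have : e.word = w := by
    unfold Edge.word
    rw [hu, hv, List.dropLast_eq_take, ← List.drop_one, List.drop_drop, hw,
      show 1 + (D - 1) = D + 1 - 1 by omega, List.take_append_drop]
  rw [this]
  refine ⟨hw, hc, ?_, ?_⟩
  · rw [hu, List.dropLast_eq_take, hw]; rfl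
  · rw [hv, List.drop_one]

theorem walk_shift {d D : ℕ} {q : List (Vertex d D)} (hq : q.IsChain Adj) (x : Vertex d D)
    (hx : q[0]? = some x) : ∀ i v, q[i]? = some v → ∀ n, n + i < D →
      v.word[n]? = x.word[n + i]? := by
  intro i
  induction i with
  | zero =>
    intro v hv n _
    rw [hx] at hv
    cases hv; rfl
  | succ i ih =>
    intro v hv n hn
    obtain ⟨hi, rfl⟩ := List.getElem?_eq_some_iff.1 hv
    rw [adj_shift (List.isChain_iff_getElem.1 hq i hi) n (by omega),
      ih _ (List.getElem?_eq_getElem (by omega)) (n + 1) (by omega)]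
    congr 1; omega

/-- The vertex read at position `i` of a long word. -/
def vtx {d D k : ℕ} (z : List (Fin (d + 1))) (hz : z.length = D + k) (hc : z.IsChain (· ≠ ·))
    (i : ℕ) (hi : i ≤ k) : Vertex d D where
  word := (z.drop i).take D
  length_eq := by rw [List.length_take, List.length_drop]; omega
  chain := (hc.drop i).take D

theorem vtx_adj {d D k : ℕ} (z : List (Fin (d + 1))) (hz : z.length = D + k)
    (hc : z.IsChain (· ≠ ·)) (i : ℕ) (hi : i + 1 ≤ k) :
    Adj (vtx (D := D) z hz hc i (by omega)) (vtx z hz hc (i + 1) hi) := by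
  refine ⟨(z.drop i).take (D + 1), ?_, (hc.drop i).take (D + 1), ?_, ?_⟩
  · rw [List.length_take, List.length_drop]; omega
  · have hl : ((z.drop i).take (D + 1)).length = D + 1 := by
      rw [List.length_take, List.length_drop]; omega
    rw [List.dropLast_eq_take, hl, List.take_take]
    simp [vtx]
  · simp only [vtx]
    rw [← List.drop_one, List.drop_take, List.drop_drop]
    rfl

/-- A word of length `D + k` without the forbidden repetitions gives a pair of vertices at
distance exactly `k`, and the vertices read along the word form the geodesic. -/
theorem vtx_mem {d D k : ℕ} (z : List (Fin (d + 1))) (hz : z.length = D + k)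
    (hc : z.IsChain (· ≠ ·)) (hkD : k ≤ D) (hrep : ∀ p ∈ Finset.Icc 1 k, ¬ Rep z D k p)
    (e : Edge d D) (a : ℕ) (ha : a + 1 ≤ k) (hs : (z.drop a).take D = e.src.word)
    (ht : (z.drop (a + 1)).take D = e.tgt.word) :
    (vtx (D := D) z hz hc 0 (by omega), vtx (D := D) z hz hc k le_rfl) ∈
      {xy : Vertex d D × Vertex d D | dist xy.1 xy.2 = k ∧
        ∃ p : List (Vertex d D), IsWalk p xy.1 xy.2 ∧ p.length = k + 1 ∧
          p[a + 1 - 1]? = some e.src ∧ p[a + 1]? = some e.tgt} := by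
  set p : List (Vertex d D) :=
    List.ofFn fun i : Fin (k + 1) => vtx (D := D) z hz hc i (by omega) with hp
  have hlen : p.length = k + 1 := by simp [hp]
  have hget : ∀ i (hi : i ≤ k), p[i]? = some (vtx z hz hc i hi) := by
    intro i hi
    rw [List.getElem?_eq_getElem (by omega)]
    simp only [hp, List.getElem_ofFn]
  have hwalk : IsWalk p (vtx (D := D) z hz hc 0 (by omega)) (vtx (D := D) z hz hc k le_rfl) := by
    refine ⟨?_, ?_, ?_⟩
    · rw [List.head?_eq_getElem?, hget 0 (by omega)]
    · rw [List.getLast?_eq_getElem?, hlen, Nat.add_sub_cancel, hget k le_rfl]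
    · refine List.isChain_iff_getElem.2 fun i hi => ?_
      simp only [hp, List.getElem_ofFn]
      exact vtx_adj z hz hc i (by omega)
  refine ⟨le_antisymm (Nat.sInf_le ⟨p, hwalk, hlen⟩) ?_, p, hwalk, hlen, ?_, ?_⟩
  · refine le_csInf ⟨k, p, hwalk, hlen⟩ ?_
    rintro j ⟨q, ⟨hq0, hq1, hqc⟩, hql⟩
    -- A walk of length `j < k` between the two ends is a repetition of period `k - j`.
    by_contra hlt
    push Not at hlt
    refine hrep (k - j) (Finset.mem_Icc.2 ⟨by omega, by omega⟩) fun i hi hiD => ?_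
    rw [List.head?_eq_getElem?] at hq0
    rw [List.getLast?_eq_getElem?, hql, Nat.add_sub_cancel] at hq1
    have := walk_shift hqc _ hq0 j _ hq1 (i - j) (by omega)
    simp only [vtx, List.getElem?_take, List.getElem?_drop] at this
    rw [if_pos (by omega), if_pos (by omega)] at this
    rw [show i + (k - j) = k + (i - j) by omega, this]
    congr 1; omega
  · rw [Nat.add_sub_cancel, hget a (by omega)]
    exact congrArg some (vertex_ext hs)
  · rw [hget (a + 1) ha]
    exact congrArg some (vertex_ext ht)

/-! ### Counting the lost words -/

/-- Upper bound for the number of words lost, at distance `k` and position `t`, to a repetition of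
period `p` running off the right end of the edge-word. -/
def F (d D k t p : ℕ) : ℕ :=
  if t < p ∧ 4 * (D - k + t) ≤ 3 * p ∧ p ≤ k - t then d ^ (k - 1 + t - p) else 0

/-- Bound for the number of extensions on the side of length `b` compatible with the conclusion of
`rep_right`, multiplied by the number of free extensions on the side of length `a`. -/
theorem card_side_le {d D a b k p : ℕ} (hk : a + b + 1 = k) (hkD : k ≤ D) (x : Fin (d + 1))
    (c : List (Fin (d + 1))) :
    d ^ a * (Finset.univ.filter fun v : List.Vector (Fin d) b =>
      p ≤ b ∧ a + 1 < p ∧ 4 * (D - b) ≤ 3 * p ∧ (ext x v.1).take (p - (a + 1)) = c).card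
      ≤ F d D k (a + 1) p := by
  by_cases h : p ≤ b ∧ a + 1 < p ∧ 4 * (D - b) ≤ 3 * p
  · have hF : F d D k (a + 1) p = d ^ a * d ^ (b - (p - (a + 1))) := by
      rw [F, if_pos (by omega), ← pow_add]
      congr 1; omega
    rw [hF]
    refine Nat.mul_le_mul_left _ (le_trans (Finset.card_le_card ?_)
      (card_ext_take_le (b := b) x (p - (a + 1)) c))
    intro v hv
    simp only [Finset.mem_filter, Finset.mem_univ, true_and] at hv ⊢
    exact hv.2.2.2
  · rw [Finset.filter_false_of_mem, Finset.card_empty, Nat.mul_zero]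
    · exact Nat.zero_le _
    · rintro v - ⟨h1, h2, h3, -⟩
      exact h ⟨h1, h2, h3⟩

/-- The word obtained from `w`, with first letter `x` and last letter `y`, by extending it to
both sides. -/
def glue {d a b : ℕ} (w : List (Fin (d + 1))) (x y : Fin (d + 1))
    (v : List.Vector (Fin d) a × List.Vector (Fin d) b) : List (Fin (d + 1)) :=
  (ext x v.1.1).reverse ++ w ++ ext y v.2.1

theorem glue_length {d a b : ℕ} (w : List (Fin (d + 1))) (x y : Fin (d + 1))
    (v : List.Vector (Fin d) a × List.Vector (Fin d) b) :
    (glue w x y v).length = a + w.length + b := by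
  simp [glue, ext_length, Nat.add_assoc]

theorem glue_chain {d a b : ℕ} {w : List (Fin (d + 1))} {x y : Fin (d + 1)}
    (hw : w.IsChain (· ≠ ·)) (hx : w.head? = some x) (hy : w.getLast? = some y)
    (v : List.Vector (Fin d) a × List.Vector (Fin d) b) :
    (glue w x y v).IsChain (· ≠ ·) := by
  have h1 := List.isChain_cons.1 (ext_chain v.1.1 x)
  have h2 := List.isChain_cons.1 (ext_chain v.2.1 y)
  unfold glue
  rw [List.isChain_append, List.isChain_append]
  refine ⟨⟨?_, hw, ?_⟩, h2.2, ?_⟩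
  · rw [List.isChain_reverse]
    exact h1.2.imp fun _ _ h => h.symm
  · intro s hs s' hs'
    rw [List.getLast?_reverse] at hs
    rw [hx] at hs'
    cases hs'
    exact (h1.1 s hs).symm
  · intro s hs s' hs'
    rw [List.getLast?_append, hy] at hs
    cases hs
    exact h2.1 s' hs'

theorem glue_injective {d a b : ℕ} (w : List (Fin (d + 1))) (x y : Fin (d + 1)) :
    Function.Injective (glue (a := a) (b := b) w x y) := by
  intro v v' h
  unfold glue at h
  obtain ⟨h1, h2⟩ := List.append_inj h (by simp [ext_length])
  obtain ⟨h3, -⟩ := List.append_inj h1 (by simp [ext_length])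
  exact Prod.ext (Subtype.ext (ext_injective _ _ _ (List.reverse_injective h3)))
    (Subtype.ext (ext_injective _ _ _ h2))

theorem card_rep_le {d D a b k p : ℕ} {w : List (Fin (d + 1))} (hw : Good w D) (x y : Fin (d + 1))
    (hk : a + b + 1 = k) (hkD : k ≤ D) (hp : p ∈ Finset.Icc 1 k) :
    (Finset.univ.filter fun v : List.Vector (Fin d) a × List.Vector (Fin d) b =>
      Rep (glue w x y v) D k p).card ≤ F d D k (a + 1) p + F d D k (b + 1) p := by
  obtain ⟨hp1, hpk⟩ := Finset.mem_Icc.1 hp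
  set B := Finset.univ.filter fun v : List.Vector (Fin d) b =>
      p ≤ b ∧ a + 1 < p ∧ 4 * (D - b) ≤ 3 * p ∧
        (ext y v.1).take (p - (a + 1)) = (w.drop (D + 1 - p)).take (p - (a + 1)) with hB
  set A := Finset.univ.filter fun v : List.Vector (Fin d) a =>
      p ≤ a ∧ b + 1 < p ∧ 4 * (D - a) ≤ 3 * p ∧
        (ext x v.1).take (p - (b + 1)) = (w.reverse.drop (D + 1 - p)).take (p - (b + 1)) with hA
  have hcard : ∀ n, (Finset.univ : Finset (List.Vector (Fin d) n)).card = d ^ n := fun n => by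
    rw [Finset.card_univ, card_vector, Fintype.card_fin]
  have hsub : (Finset.univ.filter fun v : List.Vector (Fin d) a × List.Vector (Fin d) b =>
      Rep (glue w x y v) D k p) ⊆ Finset.univ ×ˢ B ∪ A ×ˢ Finset.univ := by
    intro v hv
    rw [Finset.mem_filter] at hv
    have hrep := hv.2
    have hzl : (glue w x y v).length = D + k := by rw [glue_length, hw.length]; omega
    have hL : (ext x v.1.1).length = a := by rw [ext_length]; exact v.1.2
    have hR : (ext y v.2.1).length = b := by rw [ext_length]; exact v.2.2
    rw [Finset.mem_union, Finset.mem_product, Finset.mem_product]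
    rcases rep_period_le hw (by simp only [List.length_reverse, hL, hR]; exact hk) hkD hp1 hpk hrep
      with hle | hle
    · left
      have := rep_right hw (by simp only [List.length_reverse, hL, hR]; exact hk) hkD hp1 hle hrep
      rw [List.length_reverse, hL, hR] at this
      rw [hR] at hle
      simp only [hB, Finset.mem_filter, Finset.mem_univ, true_and]
      exact ⟨hle, this⟩
    · right
      -- The left side is the right side of the reversed configuration.
      rw [List.length_reverse] at hle
      have hrev := Rep.reverse hzl hpk hrep
      have hz : (glue w x y v).reverse = (ext y v.2.1).reverse ++ w.reverse ++ ext x v.1.1 := by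
        simp [glue]
      rw [hz] at hrev
      have := rep_right hw.reverse
        (by simp only [List.length_reverse, hL, hR]; omega) hkD hp1 hle hrev
      rw [List.length_reverse, hL, hR] at this
      rw [hL] at hle
      simp only [hA, Finset.mem_filter, Finset.mem_univ, and_true, true_and]
      exact ⟨hle, this⟩
  refine (Finset.card_le_card hsub).trans ((Finset.card_union_le _ _).trans ?_)
  rw [Finset.card_product, Finset.card_product, hcard, hcard, Nat.mul_comm A.card]
  exact Nat.add_le_add (card_side_le hk hkD y _) (card_side_le (by omega) hkD x _)

/-- Of the `d ^ (k - 1)` walks of length `k` having `e` in position `t = a + 1`, all but those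
counted by `F` on either side are geodesics. -/
theorem pow_le_N {d D a b k : ℕ} (hD : 1 ≤ D) (e : Edge d D) (hw : Good e.word D)
    (hk : a + b + 1 = k) (hkD : k ≤ D) :
    d ^ (k - 1) ≤ N e k (a + 1) +
      ∑ p ∈ Finset.Icc 1 k, (F d D k (a + 1) p + F d D k (b + 1) p) := by
  obtain ⟨hwl, hwc, hws, hwt⟩ := edge_word hD e
  obtain ⟨x, hx⟩ : ∃ x, e.word.head? = some x := by
    rw [List.head?_eq_getElem?]; exact ⟨_, List.getElem?_eq_getElem (by omega)⟩
  obtain ⟨y, hy⟩ : ∃ y, e.word.getLast? = some y := by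
    rw [List.getLast?_eq_getElem?]; exact ⟨_, List.getElem?_eq_getElem (by omega)⟩
  set P := List.Vector (Fin d) a × List.Vector (Fin d) b
  have hz : ∀ v : P, (glue e.word x y v).length = D + k := by
    intro v; rw [glue_length, hwl]; omega
  have hc : ∀ v : P, (glue e.word x y v).IsChain (· ≠ ·) := glue_chain hwc hx hy
  have hwin : ∀ (v : P) i, i ≤ 1 →
      ((glue e.word x y v).drop (a + i)).take D = (e.word.drop i).take D := by
    intro v i hi
    have hL : (ext x v.1.1).reverse.length = a := by simp [ext_length]
    rw [glue, ← List.drop_drop, List.append_assoc, List.drop_left' hL,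
      List.drop_append_of_le_length (by omega), List.take_append_of_le_length]
    rw [List.length_drop]; omega
  set good := Finset.univ.filter fun v : P => ∀ p ∈ Finset.Icc 1 k, ¬ Rep (glue e.word x y v) D k p
  set bad := fun p => Finset.univ.filter fun v : P => Rep (glue e.word x y v) D k p
  have hcov : (Finset.univ : Finset P) ⊆ good ∪ (Finset.Icc 1 k).biUnion bad := by
    intro v _
    simp only [good, bad, Finset.mem_union, Finset.mem_biUnion, Finset.mem_filter,
      Finset.mem_univ, true_and]
    by_contra hcon
    push Not at hcon
    obtain ⟨⟨p, hp, hr⟩, h2⟩ := hcon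
    exact h2 p hp hr
  have hcard : (Finset.univ : Finset P).card = d ^ (k - 1) := by
    rw [Finset.card_univ, Fintype.card_prod, card_vector, card_vector, Fintype.card_fin, ← pow_add]
    congr 1; omega
  rw [← hcard]
  refine (Finset.card_le_card hcov).trans ((Finset.card_union_le _ _).trans
    (Nat.add_le_add ?_ (Finset.card_biUnion_le.trans
      (Finset.sum_le_sum fun p hp => card_rep_le hw x y hk hkD hp))))
  rw [← Set.ncard_coe_finset]
  refine Set.ncard_le_ncard_of_injOn
    (fun v => (vtx (D := D) _ (hz v) (hc v) 0 (by omega), vtx (D := D) _ (hz v) (hc v) k le_rfl))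
    ?_ ?_ (Set.toFinite _)
  · intro v hv
    have hv' : ∀ p ∈ Finset.Icc 1 k, ¬ Rep (glue e.word x y v) D k p := by
      simp only [good, Finset.mem_coe, Finset.mem_filter, Finset.mem_univ, true_and] at hv
      exact hv
    refine vtx_mem _ (hz v) (hc v) hkD hv' e a (by omega) ?_ ?_
    · have := hwin v 0 (by omega)
      rwa [List.drop_zero, hws] at this
    · rw [hwin v 1 le_rfl, hwt, List.take_of_length_le e.tgt.length_eq.le]
  · -- Since `k ≤ D`, the two end vertices together cover the whole word.
    intro v _ v' _ h
    apply glue_injective e.word x y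
    obtain ⟨h1, h2⟩ := Prod.ext_iff.1 h
    have h1' := congrArg Vertex.word h1
    have h2' := congrArg Vertex.word h2
    simp only [vtx, List.drop_zero] at h1' h2'
    rw [List.take_of_length_le (by rw [List.length_drop, hz]; omega),
      List.take_of_length_le (by rw [List.length_drop, hz]; omega)] at h2'
    have h3 := congrArg (List.drop (D - k)) h2'
    rw [List.drop_drop, List.drop_drop, Nat.add_sub_cancel' hkD] at h3
    rw [← List.take_append_drop D (glue e.word x y v), h1', h3, List.take_append_drop]

/-! ### The final estimate -/

/-- For fixed `k`, group the pairs `(t, p)` by `m = p - t - (D - k)`: each `m` arises from at most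
`3 m` values of `p`, namely those with `m < p ≤ 4 m`. -/
theorem sum_F_le (d D k : ℕ) (hd : 2 ≤ d) (hkD : k ≤ D) :
    ∑ t ∈ Finset.Icc 1 k, ∑ p ∈ Finset.Icc 1 k, (F d D k t p : ℝ) ≤
      (d : ℝ) ^ (D - 1) * ((d : ℝ)⁻¹ ^ 2) ^ (D - k) * (3 * d / (d - 1) ^ 2) := by
  have hd0 : (0 : ℝ) < d := by positivity
  have hd1 : (1 : ℝ) < d := by exact_mod_cast hd
  set x : ℝ := (d : ℝ)⁻¹ with hx
  have hx0 : 0 ≤ x := by positivity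
  have hx1 : x < 1 := inv_lt_one_of_one_lt₀ hd1
  have hdx : (d : ℝ) * x = 1 := mul_inv_cancel₀ hd0.ne'
  rw [← Finset.sum_product']
  set P := (Finset.Icc 1 k ×ˢ Finset.Icc 1 k).filter
    fun q : ℕ × ℕ => q.1 < q.2 ∧ 4 * (D - k + q.1) ≤ 3 * q.2 ∧ q.2 ≤ k - q.1 with hP
  have hmem : ∀ q ∈ P, 1 ≤ q.1 ∧ q.1 < q.2 ∧ 4 * (D - k + q.1) ≤ 3 * q.2 ∧ q.2 + q.1 ≤ k := by
    intro q hq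
    simp only [hP, Finset.mem_filter, Finset.mem_product, Finset.mem_Icc] at hq
    omega
  have h1 : ∑ q ∈ Finset.Icc 1 k ×ˢ Finset.Icc 1 k, (F d D k q.1 q.2 : ℝ)
      = ∑ q ∈ P, (d : ℝ) ^ (D - 1) * (x ^ 2) ^ (D - k) * x ^ (q.2 - q.1 - (D - k)) := by
    rw [hP, Finset.sum_filter]
    refine Finset.sum_congr rfl fun q hq => ?_
    unfold F
    split_ifs with h
    · simp only [Finset.mem_product, Finset.mem_Icc] at hq
      have e1 : (d : ℝ) ^ (D - 1) =
          (d : ℝ) ^ (k - 1 + q.1 - q.2) * ((d : ℝ) ^ (2 * (D - k)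
            + (q.2 - q.1 - (D - k)))) := by
        rw [← pow_add]; congr 1; omega
      rw [e1, ← pow_mul, mul_assoc, mul_assoc, ← pow_add, ← mul_pow, hdx, one_pow, mul_one]
      push_cast; rfl
    · simp
  rw [h1, ← Finset.mul_sum]
  refine mul_le_mul_of_nonneg_left ?_ (by positivity)
  set g : ℕ × ℕ → (_ : ℕ) × ℕ := fun q => ⟨q.2 - q.1 - (D - k), q.2⟩ with hg
  set T : Finset ((_ : ℕ) × ℕ) := (Finset.range (D + 1)).sigma fun m => Finset.Icc (m + 1) (4 * m)
    with hT
  have hinj : Set.InjOn g P := by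
    intro q hq q' hq' h
    have a1 := hmem q hq
    have a2 := hmem q' hq'
    simp only [hg, Sigma.mk.injEq, heq_eq_eq] at h
    ext <;> omega
  have hsub : P.image g ⊆ T := by
    intro y hy
    obtain ⟨q, hq, rfl⟩ := Finset.mem_image.1 hy
    have a1 := hmem q hq
    simp only [hT, hg, Finset.mem_sigma, Finset.mem_range, Finset.mem_Icc]
    omega
  calc ∑ q ∈ P, x ^ (q.2 - q.1 - (D - k)) = ∑ y ∈ P.image g, x ^ y.1 := by
        rw [Finset.sum_image hinj]
    _ ≤ ∑ y ∈ T, x ^ y.1 :=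
        Finset.sum_le_sum_of_subset_of_nonneg hsub fun _ _ _ => by positivity
    _ = 3 * ∑ m ∈ Finset.range (D + 1), (m : ℝ) * x ^ m := by
        rw [hT, Finset.sum_sigma, Finset.mul_sum]
        refine Finset.sum_congr rfl fun m _ => ?_
        change ∑ _ ∈ Finset.Icc (m + 1) (4 * m), x ^ m = _
        rw [Finset.sum_const, Nat.card_Icc, nsmul_eq_mul, ← mul_assoc]
        rw [show 4 * m + 1 - (m + 1) = 3 * m by omega]
        push_cast; rfl
    _ ≤ 3 * (x / (1 - x) ^ 2) := by
        refine mul_le_mul_of_nonneg_left ?_ (by norm_num)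
        exact sum_le_hasSum _ (fun _ _ => by positivity)
          (hasSum_coe_mul_geometric_of_norm_lt_one (by rwa [Real.norm_of_nonneg hx0]))
    _ = 3 * d / (d - 1) ^ 2 := by
        have : (d : ℝ) - 1 ≠ 0 := by linarith
        rw [hx]; field_simp

theorem sum_geom_rev_le (y : ℝ) (hy0 : 0 ≤ y) (D : ℕ) :
    (1 - y) * ∑ k ∈ Finset.Icc 1 D, y ^ (D - k) ≤ 1 := by
  suffices h : (1 - y) * ∑ k ∈ Finset.Icc 1 D, y ^ (D - k) = 1 - y ^ D by
    rw [h]; linarith [pow_nonneg hy0 D]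
  induction D with
  | zero => simp
  | succ D ih =>
    rw [Finset.sum_Icc_succ_top (by omega)]
    have : ∑ k ∈ Finset.Icc 1 D, y ^ (D + 1 - k) = y * ∑ k ∈ Finset.Icc 1 D, y ^ (D - k) := by
      rw [Finset.mul_sum]
      refine Finset.sum_congr rfl fun k hk => ?_
      rw [Finset.mem_Icc] at hk
      rw [← pow_succ']; congr 1; omega
    rw [this, Nat.sub_self, pow_zero, mul_add, mul_left_comm, ih]; ring

theorem sum_mul_pow (x : ℝ) (n : ℕ) :
    (x - 1) ^ 2 * ∑ k ∈ Finset.Icc 1 n, (k : ℝ) * x ^ (k - 1)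
      = x ^ n * (n * (x - 1) - 1) + 1 := by
  induction n with
  | zero => simp
  | succ n ih =>
    rw [Finset.sum_Icc_succ_top (by omega), mul_add, ih]
    push_cast
    ring

/-- The total loss, summed over both sides of the edge-word, stays below the excess
`∑_{k ≤ D - 2} k d ^ (k - 1)` of the unobstructed count over `τ`. At `d = 2` the two main terms
coincide, and the closed form of the excess supplies the strict inequality. -/
theorem two_sum_F_lt (d D : ℕ) (hd : 2 ≤ d) (hD2 : 2 ≤ D)
    (hD : 8 * (d : ℝ) ^ 2 + 2 * d - 1 ≤ D * ((d : ℝ) - 1)) :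
    2 * ∑ k ∈ Finset.Icc 1 D, ∑ t ∈ Finset.Icc 1 k, ∑ p ∈ Finset.Icc 1 k, (F d D k t p : ℝ)
      < ∑ k ∈ Finset.Icc 1 (D - 2), (k : ℝ) * (d : ℝ) ^ (k - 1) := by
  have hd2 : (2 : ℝ) ≤ d := by exact_mod_cast hd
  have hd0 : (0 : ℝ) < d := by linarith
  have hdm : (0 : ℝ) < (d - 1 : ℝ) ^ 2 := pow_pos (by linarith) 2
  set G := ∑ k ∈ Finset.Icc 1 D, ((d : ℝ)⁻¹ ^ 2) ^ (D - k) with hG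
  have hle : ∑ k ∈ Finset.Icc 1 D, ∑ t ∈ Finset.Icc 1 k, ∑ p ∈ Finset.Icc 1 k, (F d D k t p : ℝ)
      ≤ (d : ℝ) ^ (D - 1) * G * (3 * d / (d - 1) ^ 2) := by
    rw [hG, Finset.mul_sum, Finset.sum_mul]
    exact Finset.sum_le_sum fun k hk => sum_F_le d D k hd (Finset.mem_Icc.1 hk).2
  have hGle : ((d : ℝ) ^ 2 - 1) * G ≤ d ^ 2 := by
    have := sum_geom_rev_le ((d : ℝ)⁻¹ ^ 2) (by positivity) D
    rw [← hG] at this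
    have h2 := mul_le_mul_of_nonneg_left this (by positivity : (0 : ℝ) ≤ (d : ℝ) ^ 2)
    have h3 : (d : ℝ) ^ 2 * (d : ℝ)⁻¹ ^ 2 = 1 := by
      rw [← mul_pow, mul_inv_cancel₀ hd0.ne', one_pow]
    rw [← mul_assoc, mul_sub, h3, mul_one] at h2
    exact h2
  have hG43 : 3 * G ≤ 4 := by
    have h4 : (4 : ℝ) ≤ d ^ 2 := by nlinarith
    by_contra hcon
    nlinarith
  have hS := sum_mul_pow (d : ℝ) (D - 2)
  have hcast : ((D - 2 : ℕ) : ℝ) = D - 2 := by push_cast [Nat.cast_sub hD2]; ring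
  rw [hcast] at hS
  set S := ∑ k ∈ Finset.Icc 1 (D - 2), (k : ℝ) * (d : ℝ) ^ (k - 1)
  have hpow : (d : ℝ) ^ (D - 1) = d ^ (D - 2) * d := by rw [← pow_succ]; congr 1; omega
  have hp0 : (0 : ℝ) < d ^ (D - 2) := by positivity
  have hlow : (d : ℝ) ^ (D - 2) * (8 * d ^ 2) + 1 ≤ (d - 1) ^ 2 * S := by
    rw [hS]
    have : 8 * (d : ℝ) ^ 2 ≤ (D - 2) * (d - 1) - 1 := by nlinarith
    linarith [mul_le_mul_of_nonneg_left this hp0.le]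
  refine lt_of_le_of_lt (mul_le_mul_of_nonneg_left hle (by norm_num)) ?_
  rw [← mul_lt_mul_iff_right₀ hdm]
  refine lt_of_lt_of_le ?_ hlow
  have : (d - 1 : ℝ) ^ 2 * (2 * (d ^ (D - 1) * G * (3 * d / (d - 1) ^ 2)))
      = d ^ (D - 2) * (2 * d ^ 2) * (3 * G) := by
    have hd1 : (d : ℝ) - 1 ≠ 0 := by linarith
    rw [hpow]; field_simp
  rw [this]
  nlinarith [mul_le_mul_of_nonneg_left hG43 (by positivity : (0 : ℝ) ≤ d ^ (D - 2) * (2 * d ^ 2))]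

/-- Summing `pow_le_N` over all distances and positions; the losses on the two sides agree after
the substitution `t ↦ k + 1 - t`. -/
theorem sum_le_cong {d D : ℕ} (hD : 1 ≤ D) (e : Edge d D) (hw : Good e.word D) :
    ∑ k ∈ Finset.Icc 1 D, k * d ^ (k - 1) ≤ cong e +
      2 * ∑ k ∈ Finset.Icc 1 D, ∑ t ∈ Finset.Icc 1 k, ∑ p ∈ Finset.Icc 1 k, F d D k t p := by
  rw [cong, Finset.mul_sum, ← Finset.sum_add_distrib]
  refine Finset.sum_le_sum fun k hk => ?_
  obtain ⟨-, hkD⟩ := Finset.mem_Icc.1 hk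
  have hflip : ∑ t ∈ Finset.Icc 1 k, ∑ p ∈ Finset.Icc 1 k, F d D k (k + 1 - t) p =
      ∑ t ∈ Finset.Icc 1 k, ∑ p ∈ Finset.Icc 1 k, F d D k t p := by
    refine Finset.sum_nbij' (fun t => k + 1 - t) (fun t => k + 1 - t) ?_ ?_ ?_ ?_ ?_
    · intro t ht; rw [Finset.mem_Icc] at *; omega
    · intro t ht; rw [Finset.mem_Icc] at *; omega
    · intro t ht; rw [Finset.mem_Icc] at ht; omega
    · intro t ht; rw [Finset.mem_Icc] at ht; omega
    · intro t _; rfl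
  have hconst : k * d ^ (k - 1) = ∑ _t ∈ Finset.Icc 1 k, d ^ (k - 1) := by simp
  rw [two_mul]
  nth_rewrite 2 [← hflip]
  rw [hconst, U, ← Finset.sum_add_distrib, ← Finset.sum_add_distrib]
  refine Finset.sum_le_sum fun t ht => ?_
  rw [Finset.mem_Icc] at ht
  have := pow_le_N (a := t - 1) (b := k - t) hD e hw (by omega) hkD
  rwa [Nat.sub_add_cancel ht.1, show k - t + 1 = k + 1 - t by omega,
    Finset.sum_add_distrib] at this

end KautzCong

/-- Fix `d ≥ 2` and let `D ≥ (8d² + 2d − 1)/(d − 1)`.  If `e` is a directed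
edge of `K(d,D)` whose edge-word is an unbordered `7/4⁺`-power-free ternary
word, then `cong(e) > τ(d,D)`. -/
theorem statement2 (d D : ℕ) (hd : 2 ≤ d)
    (hD : (8 * (d : ℝ) ^ 2 + 2 * (d : ℝ) - 1) / ((d : ℝ) - 1) ≤ (D : ℝ))
    (e : Kautz.Edge d D)
    (hub : Kautz.Unbordered e.word)
    (h74 : Kautz.SevenFourthsPlusFree e.word)
    (htern : Kautz.IsTernary e.word) :
    Kautz.tau d D < Kautz.cong e := by
  have hd2 : (2 : ℝ) ≤ d := by exact_mod_cast hd
  rw [div_le_iff₀ (by linarith)] at hD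
  have hD2 : 2 ≤ D := by
    by_contra hcon
    have : (D : ℝ) ≤ 1 := by exact_mod_cast (by omega : D ≤ 1)
    nlinarith
  obtain ⟨hwl, -⟩ := KautzCong.edge_word (by omega) e
  have h1 := KautzCong.sum_le_cong (by omega) e (KautzCong.good_of_hyp hwl hub h74)
  have h2 := KautzCong.two_sum_F_lt d D hd hD2 hD
  have h3 : (∑ k ∈ Finset.Icc 1 D, k * d ^ (k - 1)) =
      ∑ k ∈ Finset.Icc 1 (D - 2), k * d ^ (k - 1) + Kautz.tau d D := by
    obtain ⟨n, rfl⟩ := Nat.exists_eq_add_of_le' hD2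
    rw [Finset.sum_Icc_succ_top (by omega), Finset.sum_Icc_succ_top (by omega), Kautz.tau]
    simp only [Nat.add_sub_cancel, show n + 1 + 1 - 1 = n + 1 by omega]
    ring
  have h4 : 2 * ∑ k ∈ Finset.Icc 1 D, ∑ t ∈ Finset.Icc 1 k, ∑ p ∈ Finset.Icc 1 k,
      KautzCong.F d D k t p < ∑ k ∈ Finset.Icc 1 (D - 2), k * d ^ (k - 1) := by
    exact_mod_cast h2
  omega
end
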